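/- arXiv:1911.10464 — 2 statements merged into one kernel-verified Lean document; each statement's English description precedes it below -/
import Mathlib

section
/- Every Hajós graph is 4-connected. -/
/-!
Notation: `G` is a Hajós graph and a *separation* is a pair of vertex sets `A`, `B` covering `G`,
each with a private vertex, with no edge between the private parts.

The engine is the following consequence of minimality (`exists_col`).  If `A` is a proper subset
of the vertices, and some extra edges between vertices of `A` can be realized by links of `G` that
run outside `A` and are disjoint there, then `G[A]` together with the extra edges contains no
subdivision of `K5` (it would lift to `G`), hence it is 4-colorable.  So links on one side of a
separation force inequalities of colors on the other side.  Conversely, colorings of the two sides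
with the same pattern of equalities on `A ∩ B` combine, after permuting colors, to a 4-coloring of
`G`, which does not exist (`glue`).

*Separations of order at most two.*  In a separation of least order any two common vertices are
linked through either side; for order at most two both sides then have colorings with pairwise
different colors on `A ∩ B`, a contradiction (`hajos_conn3`).

*Separations of order three.*  Let `A ∩ B = {x, y, z}`.

* One side, say `A`, has a rainbow coloring, i.e. one with three colors on `x, y, z`: otherwise
  each side realizes at least two of the three patterns with exactly two equal colors, and the
  sides share a pattern (`Sep3.exists_R`).
* After shrinking `B`, each of `x, y, z` is the middle of a path in `B` between the other two
  (`exists_good`); then the same holds in `A` (`Sep3.good_left`), and `G[A]` is 2-connected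
  (`Sep3.twoConn`).
* As `B` has no rainbow coloring, these paths in `A` give `B` all three patterns with exactly two
  equal colors, so `A` has none of them.  Also `G[A]` has no subdivided triangle through `x, y, z`,
  since it would give `B` a rainbow coloring (`Sep3.no_tri`).
* In a 2-connected graph without such a triangle, `x` and `y` lie in disjoint pockets, each cut
  off from the rest by two vertices (`exists_two_pockets`).  By Menger's theorem this starts from a
  cycle through `y` and `z`: `x` lacks three disjoint paths to that cycle.
* By induction on `|A|`, a pocket with more than one vertex is, with its boundary, a side without
  rainbow coloring of a smaller 3-separation; so for every coloring of its boundary, `x` (resp. `y`) can take two different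
  colors in the pocket (`Sep3.flexible`).
* Starting from any coloring of `A`, recolor the two pockets independently.  With two available
  colors for `x` and two for `y`, exactly two of `x, y, z` can be given the same color, which `A`
  does not allow (`no_good_sep`).
-/

open SimpleGraph

/-- The internal vertices of a walk: its support with the two endpoints removed. -/
def walkInterior {V : Type} {G : SimpleGraph V} {u v : V} (p : G.Walk u v) : List V :=
  p.support.tail.dropLast

/-- `G` contains a subdivision of `K5`: five branch vertices joined by pairwise
internally disjoint paths whose interiors avoid all branch vertices. -/
def HasK5Subdivision {V : Type} (G : SimpleGraph V) : Prop :=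
  ∃ b : Fin 5 → V, Function.Injective b ∧
    ∃ P : ∀ i j : Fin 5, G.Walk (b i) (b j),
      (∀ i j : Fin 5, i < j → (P i j).IsPath) ∧
      (∀ i j : Fin 5, i < j → ∀ k : Fin 5, b k ∉ walkInterior (P i j)) ∧
      (∀ i j i' j' : Fin 5, i < j → i' < j' → (i, j) ≠ (i', j') →
        ∀ x ∈ walkInterior (P i j), x ∉ (P i' j').support)

/-- `G` contains a subdivision of `K3,3`. -/
def HasK33Subdivision {V : Type} (G : SimpleGraph V) : Prop :=
  ∃ a b : Fin 3 → V, Function.Injective a ∧ Function.Injective b ∧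
    (∀ i j : Fin 3, a i ≠ b j) ∧
    ∃ P : ∀ i j : Fin 3, G.Walk (a i) (b j),
      (∀ i j : Fin 3, (P i j).IsPath) ∧
      (∀ i j k : Fin 3, a k ∉ walkInterior (P i j) ∧ b k ∉ walkInterior (P i j)) ∧
      (∀ i j i' j' : Fin 3, (i, j) ≠ (i', j') →
        ∀ x ∈ walkInterior (P i j), x ∉ (P i' j').support)

/-- A finite graph is planar iff it contains no subdivision of `K5` or of `K3,3`
(Kuratowski's theorem). -/
def IsPlanar {V : Type} (G : SimpleGraph V) : Prop :=
  ¬ HasK5Subdivision G ∧ ¬ HasK33Subdivision G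

/-- The graph obtained from `G` by adding a new apex vertex joined to all vertices of `S`. -/
def apexGraph {V : Type} (G : SimpleGraph V) (S : Set V) : SimpleGraph (Option V) :=
  SimpleGraph.fromRel (fun x y =>
    (∃ a b : V, x = some a ∧ y = some b ∧ G.Adj a b) ∨
    (x = none ∧ ∃ a ∈ S, y = some a))

/-- `(G, S)` is planar: `G` can be drawn in a closed disc with no edge crossings and with
`S` on the boundary of the disc.  Equivalently, the graph obtained by adding an apex
vertex adjacent to all of `S` is planar. -/
def PairPlanar {V : Type} (G : SimpleGraph V) (S : Set V) : Prop :=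
  IsPlanar (apexGraph G S)

/-- `(H, S)` is planar, for a subgraph `H` of an ambient graph. -/
def SubgraphPairPlanar {V : Type} {G : SimpleGraph V} (H : G.Subgraph) (S : Set V) : Prop :=
  PairPlanar H.coe {x : H.verts | (x : V) ∈ S}

/-- A Hajós graph: no `K5`-subdivision, not 4-colorable, and vertex-minimum with these
two properties (every graph on fewer vertices has a `K5`-subdivision or is 4-colorable). -/
def IsHajos {V : Type} [Fintype V] (G : SimpleGraph V) : Prop :=
  ¬ HasK5Subdivision G ∧ ¬ G.Colorable 4 ∧
    ∀ n : ℕ, n < Fintype.card V → ∀ H : SimpleGraph (Fin n),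
      HasK5Subdivision H ∨ H.Colorable 4

/-- `(G1, G2)` is a `k`-separation of `G`: edge-disjoint subgraphs with union `G`,
`|V(G1) ∩ V(G2)| = k`, and each side carries an edge or a private vertex. -/
def IsSeparation {V : Type} {G : SimpleGraph V} (G1 G2 : G.Subgraph) (k : ℕ) : Prop :=
  G1 ⊔ G2 = ⊤ ∧ Disjoint G1.edgeSet G2.edgeSet ∧
  (G1.verts ∩ G2.verts).ncard = k ∧
  (G1.edgeSet.Nonempty ∨ (G1.verts \ G2.verts).Nonempty) ∧
  (G2.edgeSet.Nonempty ∨ (G2.verts \ G1.verts).Nonempty)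

/-- `W` is a wheel with center `w`: it consists of a cycle `C` avoiding `w`, together with
at least three edges (spokes) from `w` to `C`. -/
def IsWheelSubgraph {V : Type} {G : SimpleGraph V} (W : G.Subgraph) (w : V) : Prop :=
  ∃ (u : V) (C : G.Walk u u) (T : Set V), C.IsCycle ∧ w ∉ C.support ∧
    T ⊆ {x | x ∈ C.support} ∧ 3 ≤ T.ncard ∧
    W.verts = insert w {x | x ∈ C.support} ∧
    W.edgeSet = {e | e ∈ C.edges} ∪ (fun x => s(w, x)) '' T

/-- The subgraph `H` contains an `S`-good wheel: a wheel `W ≤ H` with center `w ∉ S` such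
that every vertex of `S ∩ V(W)` is a neighbor of `w` in `H`. -/
def HasGoodWheel {V : Type} {G : SimpleGraph V} (H : G.Subgraph) (S : Set V) : Prop :=
  ∃ (W : G.Subgraph) (w : V), W ≤ H ∧ IsWheelSubgraph W w ∧ w ∉ S ∧
    ∀ s ∈ S, s ∈ W.verts → H.Adj w s

/-- `G` is `k`-connected: more than `k` vertices, and deleting fewer than `k` vertices
leaves a connected graph. -/
def IsKConnected {V : Type} [Fintype V] (G : SimpleGraph V) (k : ℕ) : Prop :=
  k < Fintype.card V ∧ ∀ X : Set V, X.ncard < k → (G.induce (Xᶜ : Set V)).Connected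

/- The six obstruction graphs, with `S = {t1,...,t5} = {0,1,2,3,4}` and the remaining
vertices `u, v, w, z` labelled `5, 6, 7, 8`. -/

def Obs1 : SimpleGraph (Fin 6) :=
  SimpleGraph.fromEdgeSet {s(5,0), s(5,1), s(5,2), s(5,3)}

def Obs2 : SimpleGraph (Fin 6) :=
  SimpleGraph.fromEdgeSet {s(5,0), s(5,1), s(5,2), s(5,3), s(5,4)}

def Obs3 : SimpleGraph (Fin 7) :=
  SimpleGraph.fromEdgeSet {s(5,6), s(5,0), s(5,1), s(5,2), s(6,0), s(6,2), s(6,3), s(6,4)}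

def Obs4 : SimpleGraph (Fin 7) :=
  SimpleGraph.fromEdgeSet {s(5,6), s(5,0), s(5,1), s(5,2), s(6,2), s(6,3), s(6,4)}

def Obs5 : SimpleGraph (Fin 8) :=
  SimpleGraph.fromEdgeSet {s(5,6), s(5,0), s(5,1), s(5,2), s(6,7), s(6,0), s(6,2), s(6,3),
    s(7,0), s(7,3), s(7,4)}

def Obs6 : SimpleGraph (Fin 9) :=
  SimpleGraph.fromEdgeSet {s(8,5), s(8,6), s(8,7), s(8,0), s(8,1), s(8,4), s(5,6), s(5,1),
    s(5,2), s(6,7), s(6,2), s(6,3), s(7,3), s(7,4)}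

/-- The subgraph `G1` (with distinguished set `S`) is isomorphic to the graph `O` on
`Fin n` by an isomorphism carrying `S` exactly onto `SO`. -/
def IsoCarrying {V : Type} {G : SimpleGraph V} (G1 : G.Subgraph) (S : Set V)
    {n : ℕ} (O : SimpleGraph (Fin n)) (SO : Set (Fin n)) : Prop :=
  ∃ f : G1.coe ≃g O, ∀ x : G1.verts, ((x : V) ∈ S ↔ f x ∈ SO)

/-- `(G1, S)` is one of the six obstruction graphs of Figure 1. -/
def IsObstruction {V : Type} {G : SimpleGraph V} (G1 : G.Subgraph) (S : Set V) : Prop :=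
  IsoCarrying G1 S Obs1 {0,1,2,3,4} ∨ IsoCarrying G1 S Obs2 {0,1,2,3,4} ∨
  IsoCarrying G1 S Obs3 {0,1,2,3,4} ∨ IsoCarrying G1 S Obs4 {0,1,2,3,4} ∨
  IsoCarrying G1 S Obs5 {0,1,2,3,4} ∨ IsoCarrying G1 S Obs6 {0,1,2,3,4}

/-- `G − X + T`: delete the vertices of `X` (with all incident edges) and add the pairs
in `T` as edges. -/
def deleteAdd {V : Type} (G : SimpleGraph V) (X : Set V) (T : Set (V × V)) : SimpleGraph V :=
  SimpleGraph.fromRel (fun a b => (G.Adj a b ∧ a ∉ X ∧ b ∉ X) ∨ (a, b) ∈ T)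

/-! ### Links and the set form of `K5`-subdivisions -/

section Links

/-- `Linked H U u v`: some walk of `H` from `u` to `v` has all its vertices in `U`. -/
def Linked {V : Type} (H : SimpleGraph V) (U : Set V) (u v : V) : Prop :=
  u ∈ U ∧ Relation.ReflTransGen (fun a b => H.Adj a b ∧ b ∈ U) u v

namespace Linked

variable {V : Type} {H H' : SimpleGraph V} {U U' D : Set V} {u v w : V}

theorem refl (h : u ∈ U) : Linked H U u u := ⟨h, .refl⟩

theorem left (h : Linked H U u v) : u ∈ U := h.1

theorem right (h : Linked H U u v) : v ∈ U := by
  obtain ⟨h1, h2⟩ := h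
  induction h2 with
  | refl => exact h1
  | tail _ h _ => exact h.2

theorem trans (h : Linked H U u v) (h' : Linked H U v w) : Linked H U u w :=
  ⟨h.1, h.2.trans h'.2⟩

theorem adj (hu : u ∈ U) (hv : v ∈ U) (h : H.Adj u v) : Linked H U u v :=
  ⟨hu, .single ⟨h, hv⟩⟩

theorem tail (h : Linked H U u v) (hvw : H.Adj v w) (hw : w ∈ U) : Linked H U u w :=
  ⟨h.1, h.2.tail ⟨hvw, hw⟩⟩

/-- Induction along the walk, one step at the far end at a time. -/
theorem ind {P : V → Prop} (h : Linked H U u v) (h0 : P u)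
    (hs : ∀ a b, Linked H U u a → P a → H.Adj a b → b ∈ U → P b) : P v := by
  obtain ⟨h1, h2⟩ := h
  induction h2 with
  | refl => exact h0
  | tail hab h ih => exact hs _ _ ⟨h1, hab⟩ ih h.1 h.2

theorem symm (h : Linked H U u v) : Linked H U v u := by
  refine h.ind (P := fun v => Linked H U v u) (refl h.1) ?_
  intro a b ha hP hab hb
  exact (adj hb ha.right hab.symm).trans hP

/-- Transport of links: it suffices to link the ends of every single edge. -/
theorem map (h : Linked H U u v) (hu : u ∈ U')
    (hs : ∀ a b, a ∈ U → b ∈ U → H.Adj a b → a ∈ U' → Linked H' U' a b) : Linked H' U' u v := by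
  refine h.ind (P := fun v => Linked H' U' u v) (refl hu) ?_
  intro a b ha hP hab hb
  exact hP.trans (hs a b ha.right hb hab hP.right)

theorem mono (h : Linked H U u v) (hU : U ⊆ U') : Linked H U' u v :=
  h.map (hU h.1) fun _ _ ha hb hab _ => adj (hU ha) (hU hb) hab

theorem mono' (h : Linked H U u v) (hH : H ≤ H') : Linked H' U u v :=
  h.map h.1 fun _ _ ha hb hab _ => adj ha hb (hH hab)

/-- A walk leaving `D` has a first vertex outside `D`. -/
theorem exit (h : Linked H U u v) (hu : u ∈ D) (hv : v ∉ D) :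
    ∃ d w, d ∈ D ∧ w ∉ D ∧ w ∈ U ∧ H.Adj d w ∧ Linked H (U ∩ D) u d := by
  have := h.ind (P := fun v => Linked H (U ∩ D) u v ∨
    ∃ d w, d ∈ D ∧ w ∉ D ∧ w ∈ U ∧ H.Adj d w ∧ Linked H (U ∩ D) u d) (Or.inl (refl ⟨h.1, hu⟩)) ?_
  · rcases this with h | h
    · exact absurd h.right.2 hv
    · exact h
  · rintro a b - (hP | hP) hab hb
    · by_cases hbD : b ∈ D
      · exact Or.inl (hP.tail hab ⟨hb, hbD⟩)
      · exact Or.inr ⟨a, b, hP.right.2, hbD, hb, hab, hP⟩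
    · exact Or.inr hP

/-- A walk meeting `T` has a first vertex in `T`. -/
theorem first {T : Set V} (h : Linked H U u v) (hv : v ∈ T) :
    ∃ w, w ∈ T ∧ w ∈ U ∧ Linked H (insert w (U \ T)) u w := by
  by_cases hu : u ∈ T
  · exact ⟨u, hu, h.1, refl (by simp)⟩
  obtain ⟨d, w, hd, hw, hwU, hdw, hl⟩ := h.exit (D := Tᶜ) hu (by simpa using hv)
  refine ⟨w, by simpa using hw, hwU, ?_⟩
  refine (hl.mono ?_).tail hdw (by simp)
  intro x hx; exact Or.inr ⟨hx.1, hx.2⟩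

theorem exists_adj (h : Linked H U u v) (hne : u ≠ v) : ∃ w ∈ U, H.Adj u w := by
  obtain ⟨d, w, hd, _, hwU, hdw, _⟩ := h.exit (D := {u}) rfl (by simpa using hne.symm)
  obtain rfl : d = u := hd
  exact ⟨w, hwU, hdw⟩

theorem of_walk (p : H.Walk u v) (h : ∀ x ∈ p.support, x ∈ U) : Linked H U u v := by
  induction p with
  | nil => exact refl (h _ (by simp))
  | cons hadj p ih =>
    have := ih fun x hx => h x (by simp [hx])
    exact (adj (h _ (by simp)) this.1 hadj).trans this

theorem exists_walk (h : Linked H U u v) : ∃ p : H.Walk u v, ∀ x ∈ p.support, x ∈ U := by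
  refine h.ind (P := fun v => ∃ p : H.Walk u v, ∀ x ∈ p.support, x ∈ U)
    ⟨.nil, by simpa using h.1⟩ ?_
  rintro a b _ ⟨p, hp⟩ hab hb
  refine ⟨p.concat hab, ?_⟩
  intro x hx
  simp only [Walk.support_concat, List.mem_append, List.mem_singleton] at hx
  rcases hx with hx | rfl
  · exact hp x hx
  · exact hb

theorem exists_path (h : Linked H U u v) :
    ∃ p : H.Walk u v, p.IsPath ∧ ∀ x ∈ p.support, x ∈ U := by
  classical
  obtain ⟨p, hp⟩ := h.exists_walk
  exact ⟨p.bypass, p.bypass_isPath, fun x hx => hp x (p.support_bypass_subset_support hx)⟩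

end Linked

/-- The set of vertices reachable from `u` inside `U`. -/
def reach {V : Type} (H : SimpleGraph V) (U : Set V) (u : V) : Set V := {v | Linked H U u v}

/-- Set form of a `K5`-subdivision: the ten paths are replaced by vertex sets linking
their ends. -/
theorem hasK5_iff {V : Type} {H : SimpleGraph V} : HasK5Subdivision H ↔
    ∃ b : Fin 5 → V, Function.Injective b ∧ ∃ U : Fin 5 → Fin 5 → Set V,
      (∀ i j, i < j → Linked H (U i j) (b i) (b j)) ∧
      (∀ i j, i < j → ∀ k, b k ∈ U i j → k = i ∨ k = j) ∧
      (∀ i j i' j', i < j → i' < j' → (i, j) ≠ (i', j') →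
        ∀ x ∈ U i j, x ∈ U i' j' → x ∈ Set.range b) := by
  have key : ∀ {u v : V} (p : H.Walk u v), p.IsPath → ∀ x,
      (x ∈ walkInterior p ↔ x ∈ p.support ∧ x ≠ u ∧ x ≠ v) := by
    intro u v p hp x
    unfold walkInterior
    cases p with
    | nil => simp
    | cons h p =>
      rename_i w
      have h1 : p.support = p.support.dropLast ++ [v] := by
        have := p.support.dropLast_append_getLast (by simp)
        rw [← this]; simp
      have h2 := hp.support_nodup
      simp only [Walk.support_cons, List.tail_cons, List.nodup_cons, List.mem_cons] at *
      have h3 : p.support.Nodup := h2.2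
      rw [h1] at h3 h2
      simp only [List.nodup_append, List.mem_append, List.mem_singleton] at h3 h2
      rw [h1]
      simp only [List.dropLast_append_cons, List.dropLast_singleton, List.append_nil,
        List.mem_append, List.mem_singleton]
      grind
  constructor
  · rintro ⟨b, hb, P, h1, h2, h3⟩
    refine ⟨b, hb, fun i j => {x | x ∈ (P i j).support}, ?_, ?_, ?_⟩
    · intro i j _
      exact Linked.of_walk (P i j) fun x hx => hx
    · intro i j hij k hk
      have := h2 i j hij k
      rw [key _ (h1 i j hij)] at this
      by_contra hc
      push Not at hc
      exact this ⟨hk, fun h => hc.1 (hb h), fun h => hc.2 (hb h)⟩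
    · intro i j i' j' hij hij' hne x hx hx'
      by_contra hc
      refine h3 i j i' j' hij hij' hne x ?_ hx'
      rw [key _ (h1 i j hij)]
      exact ⟨hx, fun h => hc ⟨i, h.symm⟩, fun h => hc ⟨j, h.symm⟩⟩
  · rintro ⟨b, hb, U, h1, h2, h3⟩
    have hP : ∀ i j, ∃ p : H.Walk (b i) (b j), i < j →
        (p.IsPath ∧ ∀ x ∈ p.support, x ∈ U i j) := by
      intro i j
      rcases lt_trichotomy i j with h | rfl | h
      · obtain ⟨p, hp⟩ := (h1 i j h).exists_path
        exact ⟨p, fun _ => hp⟩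
      · exact ⟨.nil, fun h => absurd h (lt_irrefl _)⟩
      · obtain ⟨p, hp⟩ := (h1 j i h).exists_path
        exact ⟨p.reverse, fun h' => absurd h (not_lt.2 h'.le)⟩
    choose P hP using hP
    refine ⟨b, hb, P, fun i j hij => (hP i j hij).1, ?_, ?_⟩
    · intro i j hij k hk
      rw [key _ (hP i j hij).1] at hk
      rcases h2 i j hij k ((hP i j hij).2 _ hk.1) with rfl | rfl
      · exact hk.2.1 rfl
      · exact hk.2.2 rfl
    · intro i j i' j' hij hij' hne x hx hx'
      rw [key _ (hP i j hij).1] at hx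
      have hxU := (hP i j hij).2 _ hx.1
      obtain ⟨k, rfl⟩ := h3 i j i' j' hij hij' hne x hxU ((hP i' j' hij').2 _ hx')
      rcases h2 i j hij k hxU with rfl | rfl
      · exact hx.2.1 rfl
      · exact hx.2.2 rfl

end Links

/-! ### Menger's theorem and fans -/

section Fans

namespace Linked

variable {V : Type} {H H' : SimpleGraph V} {U U' D : Set V} {u v w : V}

/-- Trimming a link at its first vertex in `T`: the resulting set `W` meets `T` only there, and
its other vertices are reached before `T`. -/
theorem trim {T : Set V} (h : Linked H U u v) (hv : v ∈ T) :
    ∃ w W, w ∈ T ∧ w ∈ U ∧ W ⊆ U ∧ (∀ y ∈ W, y ∈ T → y = w) ∧ Linked H W u w ∧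
      ∀ y ∈ W, y = w ∨ Linked H (U \ T) u y := by
  by_cases hu : u ∈ T
  · exact ⟨u, {u}, hu, h.1, by simpa using h.1, by simp, refl rfl, by simp⟩
  obtain ⟨d, w, hd, hw, hwU, hdw, hl⟩ := h.exit (D := Tᶜ) hu (by simpa using hv)
  have hl' : Linked H (U \ T) u d := hl
  refine ⟨w, insert w (reach H (U \ T) u), by simpa using hw, hwU, ?_, ?_, ?_, ?_⟩
  · rintro y (rfl | hy)
    · exact hwU
    · exact (Linked.right hy).1
  · rintro y (rfl | hy) hyT
    · rfl
    · exact absurd hyT (Linked.right hy).2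
  · refine Linked.tail (v := d) ?_ hdw (by simp)
    refine hl'.ind (P := fun d => Linked H (insert w (reach H (U \ T) u)) u d)
      (refl (Or.inr (refl hl'.1))) ?_
    intro a b ha hP hab hb
    exact hP.tail hab (Or.inr (ha.tail hab hb))
  · rintro y (rfl | hy)
    · exact Or.inl rfl
    · exact Or.inr hy

end Linked

section Menger

variable {V : Type}

/-- Let `H` arise from `H'` by adding the edge `uv`, and let `S` separate `A₀` from `B₀` and from
`v` in `H'`. If `T` separates `A₀` from `S ∪ {u}` in `H'`, then `T` separates `A₀` from `B₀` in `H`. -/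
theorem menger_aux {H H' : SimpleGraph V} {u v : V} {S T A₀ B₀ : Set V}
    (hH : ∀ x y, H.Adj x y → H'.Adj x y ∨ (x = u ∧ y = v) ∨ (x = v ∧ y = u))
    (hS : ∀ a ∈ A₀, ∀ b ∈ B₀, ¬ Linked H' Sᶜ a b)
    (hv : ∀ a ∈ A₀, ¬ Linked H' Sᶜ a v)
    (hT : ∀ a ∈ A₀, ∀ p ∈ insert u S, ¬ Linked H' Tᶜ a p) :
    ∀ a ∈ A₀, ∀ b ∈ B₀, ¬ Linked H Tᶜ a b := by
  intro a ha b hb hl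
  have h0 : Linked H' (Tᶜ ∩ (insert u S)ᶜ) a b := by
    refine hl.ind (P := fun x => Linked H' (Tᶜ ∩ (insert u S)ᶜ) a x) (Linked.refl ⟨hl.1, ?_⟩) ?_
    · intro hp
      exact hT a ha a hp (Linked.refl hl.1)
    · intro x y _ hP hxy hy
      have hxy' : H'.Adj x y := by
        rcases hH x y hxy with h | ⟨rfl, rfl⟩ | ⟨rfl, rfl⟩
        · exact h
        · exact absurd (Or.inl rfl) hP.right.2
        · exact absurd (hP.mono fun z hz hzS => hz.2 (Or.inr hzS)) (hv a ha)
      refine hP.tail hxy' ⟨hy, fun hp => hT a ha y hp ?_⟩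
      exact (hP.mono Set.inter_subset_left).tail hxy' hy
  exact hS a ha b hb (h0.mono fun z hz hzS => hz.2 (Or.inr hzS))

theorem range_of_ncard [Finite V] {k : ℕ} {q : Fin k → V} (hq : Function.Injective q) {Q : Set V}
    (hQ : ∀ i, q i ∈ Q) (hc : Q.ncard ≤ k) : ∀ x ∈ Q, ∃ i, q i = x := by
  have h1 : (Set.range q).ncard = k := by
    rw [← Set.image_univ, Set.ncard_image_of_injective _ hq]; simp
  have h2 : Set.range q = Q := by
    apply Set.eq_of_subset_of_ncard_le
    · rintro _ ⟨i, rfl⟩; exact hQ i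
    · omega
    · exact Set.toFinite _
  intro x hx
  rw [← h2] at hx
  exact hx

/-- Menger's theorem for vertex sets, with disjoint connecting sets in place of disjoint paths. -/
theorem menger [Finite V] (k : ℕ) : ∀ (n : ℕ) (H : SimpleGraph V), H.edgeSet.ncard = n →
    ∀ A₀ B₀ : Set V,
    (∀ S : Set V, (∀ a ∈ A₀, ∀ b ∈ B₀, ¬ Linked H Sᶜ a b) → k ≤ S.ncard) →
    ∃ Q : Fin k → Set V, (∀ i, ∃ a ∈ A₀, ∃ b ∈ B₀, Linked H (Q i) a b) ∧
      ∀ i j x, x ∈ Q i → x ∈ Q j → i = j := by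
  intro n
  induction n using Nat.strong_induction_on with
  | _ n ih =>
  intro H hn A₀ B₀ hsep
  by_cases hE : ∃ u v, H.Adj u v
  swap
  · push Not at hE
    have h1 := hsep (A₀ ∩ B₀) (by
      intro a ha b hb hl
      by_cases hab : a = b
      · subst hab; exact hl.1 ⟨ha, hb⟩
      · obtain ⟨w, _, hw⟩ := hl.exists_adj hab
        exact hE _ _ hw)
    obtain ⟨s, hs, hsc⟩ := Set.exists_subset_card_eq h1
    obtain ⟨e⟩ : Nonempty (Fin k ≃ s) := by
      rw [← Nat.card_coe_set_eq] at hsc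
      exact ⟨(Finite.equivFinOfCardEq hsc).symm⟩
    refine ⟨fun i => {(e i : V)}, fun i => ⟨e i, (hs (e i).2).1, e i, (hs (e i).2).2,
      Linked.refl rfl⟩, ?_⟩
    intro i j x hi hj
    exact e.injective (Subtype.ext (Eq.trans (Eq.symm hi) hj))
  obtain ⟨u₀, v₀, huv₀⟩ := hE
  set H' := H.deleteEdges {s(u₀, v₀)} with hH'
  have hle : H' ≤ H := H.deleteEdges_le _
  have hlt : H'.edgeSet.ncard < n := by
    rw [← hn]
    apply Set.ncard_lt_ncard _ (Set.toFinite _)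
    rw [hH', edgeSet_deleteEdges]
    refine ⟨Set.sdiff_subset, fun h => ?_⟩
    exact (h (show s(u₀, v₀) ∈ H.edgeSet from huv₀)).2 rfl
  by_cases hsep' : ∀ S : Set V, (∀ a ∈ A₀, ∀ b ∈ B₀, ¬ Linked H' Sᶜ a b) → k ≤ S.ncard
  · obtain ⟨Q, hQ, hQ'⟩ := ih _ hlt H' rfl A₀ B₀ hsep'
    refine ⟨Q, fun i => ?_, hQ'⟩
    obtain ⟨a, ha, b, hb, hl⟩ := hQ i
    exact ⟨a, ha, b, hb, hl.mono' hle⟩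
  push Not at hsep'
  obtain ⟨S, hS, hSk⟩ := hsep'
  have hS1 : ¬ ∀ a ∈ A₀, ∀ b ∈ B₀, ¬ Linked H Sᶜ a b := fun h => absurd (hsep S h) (by omega)
  push Not at hS1
  obtain ⟨a, ha, b, hb, hab⟩ := hS1
  obtain ⟨u, v, hu, hv, hvS, huv, hau⟩ := hab.exit (D := reach H' Sᶜ a)
    (Linked.refl hab.1) (hS a ha b hb)
  have hau : Linked H' Sᶜ a u := hu
  have heq : s(u, v) = s(u₀, v₀) := by
    by_contra hne
    exact hv (hau.tail (show H'.Adj u v by rw [hH', deleteEdges_adj]; exact ⟨huv, hne⟩) hvS)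
  have hH : ∀ x y, H.Adj x y → H'.Adj x y ∨ (x = u ∧ y = v) ∨ (x = v ∧ y = u) := by
    intro x y hxy
    by_cases h : s(x, y) = s(u, v)
    · right; simpa using h
    · left
      rw [hH', deleteEdges_adj, ← heq]
      exact ⟨hxy, h⟩
  have hbv : Linked H' Sᶜ b v := by
    obtain ⟨d, w, hd, hw, hwS, hdw, _⟩ := hab.symm.exit (D := reach H' Sᶜ b)
      (Linked.refl hab.right) (fun h => hS a ha b hb (Linked.symm h))
    have hd : Linked H' Sᶜ b d := hd
    rcases hH d w hdw with h | ⟨rfl, rfl⟩ | ⟨rfl, rfl⟩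
    · exact absurd (hd.tail h hwS) hw
    · exact absurd (hau.trans hd.symm) (hS a ha b hb)
    · exact hd
  have hAv : ∀ a ∈ A₀, ¬ Linked H' Sᶜ a v := fun a ha h => hS a ha b hb (h.trans hbv.symm)
  have hBu : ∀ b ∈ B₀, ¬ Linked H' Sᶜ b u := fun b hb h => hS a ha b hb (hau.trans h.symm)
  have hSs : ∀ b ∈ B₀, ∀ a ∈ A₀, ¬ Linked H' Sᶜ b a := fun b hb a ha h => hS a ha b hb h.symm
  have huS : u ∉ S := hau.right
  have hvS : v ∉ S := hvS
  have hne : u ≠ v := huv.ne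
  obtain ⟨M, hM, hMd⟩ := ih _ hlt H' rfl A₀ (insert u S) (fun T hT =>
    hsep T (menger_aux hH hS hAv hT))
  obtain ⟨N, hN, hNd⟩ := ih _ hlt H' rfl B₀ (insert v S) (fun T hT =>
    hsep T (fun a ha b hb h => menger_aux (u := v) (v := u) (fun x y h => by
      have := hH x y h; tauto) hSs hBu hT b hb a ha h.symm))
  have hM' : ∀ i, ∃ a w W, a ∈ A₀ ∧ w ∈ insert u S ∧ W ⊆ M i ∧
      (∀ y ∈ W, y ∈ insert u S → y = w) ∧ Linked H' W a w ∧
      ∀ y ∈ W, y = w ∨ Linked H' (M i \ insert u S) a y := by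
    intro i
    obtain ⟨a, ha, b, hb, hl⟩ := hM i
    obtain ⟨w, W, h1, _, h2, h3, h4, h5⟩ := hl.trim hb
    exact ⟨a, w, W, ha, h1, h2, h3, h4, h5⟩
  have hN' : ∀ i, ∃ a w W, a ∈ B₀ ∧ w ∈ insert v S ∧ W ⊆ N i ∧
      (∀ y ∈ W, y ∈ insert v S → y = w) ∧ Linked H' W a w ∧
      ∀ y ∈ W, y = w ∨ Linked H' (N i \ insert v S) a y := by
    intro i
    obtain ⟨a, ha, b, hb, hl⟩ := hN i
    obtain ⟨w, W, h1, _, h2, h3, h4, h5⟩ := hl.trim hb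
    exact ⟨a, w, W, ha, h1, h2, h3, h4, h5⟩
  choose a' p M' ha' hp hM1 hM2 hM3 hM4 using hM'
  choose b' q N' hb' hq hN1 hN2 hN3 hN4 using hN'
  have hqinj : Function.Injective q := fun i j h =>
    hNd i j (q i) (hN1 i (hN3 i).right) (h ▸ hN1 j (hN3 j).right)
  have hpinj : Function.Injective p := fun i j h =>
    hMd i j (p i) (hM1 i (hM3 i).right) (h ▸ hM1 j (hM3 j).right)
  have hsurj := range_of_ncard hqinj hq (by rw [Set.ncard_insert_of_notMem hvS]; omega)
  have hφ : ∀ i, ∃ j, (p i = q j ∧ p i ∈ S) ∨ (p i = u ∧ q j = v) := by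
    intro i
    rcases hp i with h | h
    · obtain ⟨j, hj⟩ := hsurj v (Or.inl rfl)
      exact ⟨j, Or.inr ⟨h, hj⟩⟩
    · obtain ⟨j, hj⟩ := hsurj (p i) (Or.inr h)
      exact ⟨j, Or.inl ⟨hj.symm, h⟩⟩
  choose φ hφ using hφ
  have hφinj : Function.Injective φ := by
    intro i j hij
    apply hpinj
    have h1 := hφ i
    have h2 := hφ j
    rw [hij] at h1
    grind
  have hcross : ∀ i j x, x ∈ M' i → x ∈ N' j → φ i = j := by
    intro i j x hx hy
    by_cases hxS : x ∈ S
    · have h1 := hM2 i x hx (Or.inr hxS)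
      have h2 := hN2 j x hy (Or.inr hxS)
      apply hqinj
      rcases hφ i with h | h
      · rw [← h.1, ← h1, ← h2]
      · exact absurd hxS (by rw [h1, h.1]; exact huS)
    · exfalso
      have hx' : x = u ∨ Linked H' Sᶜ (a' i) x := by
        rcases hM4 i x hx with h | h
        · left
          rcases hp i with h' | h'
          · exact h.trans h'
          · exact absurd (h ▸ h') hxS
        · exact Or.inr (h.mono fun z hz hzS => hz.2 (Or.inr hzS))
      have hy' : x = v ∨ Linked H' Sᶜ (b' j) x := by
        rcases hN4 j x hy with h | h
        · left
          rcases hq j with h' | h'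
          · exact h.trans h'
          · exact absurd (h ▸ h') hxS
        · exact Or.inr (h.mono fun z hz hzS => hz.2 (Or.inr hzS))
      rcases hx' with rfl | hx' <;> rcases hy' with rfl | hy'
      · exact hne rfl
      · exact hBu _ (hb' j) hy'
      · exact hAv _ (ha' i) hx'
      · exact hS _ (ha' i) _ (hb' j) (hx'.trans hy'.symm)
  refine ⟨fun i => M' i ∪ N' (φ i), ?_, ?_⟩
  · intro i
    refine ⟨a' i, ha' i, b' (φ i), hb' _, ?_⟩
    have h1 : Linked H (M' i ∪ N' (φ i)) (a' i) (p i) :=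
      ((hM3 i).mono Set.subset_union_left).mono' hle
    have h2 : Linked H (M' i ∪ N' (φ i)) (q (φ i)) (b' (φ i)) :=
      (((hN3 (φ i)).mono Set.subset_union_right).mono' hle).symm
    refine (h1.trans ?_).trans h2
    rcases hφ i with h | h
    · rw [← h.1]; exact Linked.refl h1.right
    · exact Linked.adj h1.right h2.left (by rw [h.1, h.2]; exact huv)
  · rintro i j x (hi | hi) (hj | hj)
    · exact hMd i j x (hM1 i hi) (hM1 j hj)
    · exact hφinj (hcross i _ x hi hj)
    · exact hφinj (hcross j _ x hj hi).symm
    · exact hφinj (hNd _ _ x (hN1 _ hi) (hN1 _ hj))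

/-- The graph on the same vertex type keeping only the edges of `G` inside `A`. -/
def restr (G : SimpleGraph V) (A : Set V) : SimpleGraph V where
  Adj a b := G.Adj a b ∧ a ∈ A ∧ b ∈ A
  symm := ⟨fun _ _ h => ⟨h.1.symm, h.2.2, h.2.1⟩⟩
  loopless := ⟨fun a h => G.loopless.irrefl a h.1⟩

theorem restr_le (G : SimpleGraph V) (A : Set V) : restr G A ≤ G := fun _ _ h => h.1

theorem Linked.restr {G : SimpleGraph V} {A U : Set V} {u v : V} (h : Linked G U u v)
    (hU : U ⊆ A) : Linked (restr G A) U u v :=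
  h.map h.1 fun _ _ ha hb hab _ => Linked.adj ha hb ⟨hab, hU ha, hU hb⟩

/-- Fan version of Menger's theorem: if fewer than `k` vertices never separate `x` from `T`,
there are `k` links from `x` to distinct vertices of `T`, meeting pairwise only in `x`. -/
theorem menger_fan [Finite V] (k : ℕ) (H : SimpleGraph V) (x : V) (T : Set V) (hx : x ∉ T)
    (h : ∀ S : Set V, x ∉ S → S.ncard < k → ∃ u ∈ T, Linked H Sᶜ x u) :
    ∃ (e : Fin k → V) (Q : Fin k → Set V), Function.Injective e ∧
      ∀ i, e i ∈ T ∧ Linked H (Q i) x (e i) ∧ (∀ y ∈ Q i, y ∈ T → y = e i) ∧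
        ∀ j, i ≠ j → ∀ y ∈ Q i, y ∈ Q j → y = x := by
  obtain ⟨Q, hQ, hQd⟩ := menger k _ (restr H {x}ᶜ) rfl {y | H.Adj x y} T (by
    intro S hS
    by_contra hk
    push Not at hk
    have : (S \ {x}).ncard < k := (Set.ncard_le_ncard Set.sdiff_subset).trans_lt hk
    obtain ⟨u, hu, hl⟩ := h (S \ {x}) (by simp) this
    have hux : u ≠ x := fun h => hx (h ▸ hu)
    obtain ⟨d, w, hd, hw, _, hdw, hl'⟩ := hl.symm.exit (D := {x}ᶜ) hux (by simp)
    obtain rfl : w = x := by simpa using hw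
    refine hS d hdw.symm u hu ?_
    refine (hl'.restr Set.inter_subset_right).symm.mono ?_
    rintro z ⟨hz1, hz2⟩ hzS
    exact hz1 ⟨hzS, hz2⟩)
  have hQ' : ∀ i, ∃ a w W, H.Adj x a ∧ w ∈ T ∧ W ⊆ Q i ∧ (∀ y ∈ W, y ∈ T → y = w) ∧
      Linked H W a w := by
    intro i
    obtain ⟨a, ha, b, hb, hl⟩ := hQ i
    obtain ⟨w, W, h1, _, h2, h3, h4, _⟩ := hl.trim hb
    exact ⟨a, w, W, ha, h1, h2, h3, h4.mono' (restr_le _ _)⟩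
  choose a e W ha he hW1 hW2 hW3 using hQ'
  refine ⟨e, fun i => insert x (W i), ?_, ?_⟩
  · intro i j hij
    exact hQd i j (e i) (hW1 i (hW3 i).right) (hij ▸ hW1 j (hW3 j).right)
  · intro i
    refine ⟨he i, ?_, ?_, ?_⟩
    · exact (Linked.adj (Set.mem_insert _ _) (Set.mem_insert_of_mem _ (hW3 i).left) (ha i)).trans
        ((hW3 i).mono (Set.subset_insert _ _))
    · rintro y (rfl | hy) hyT
      · exact absurd hyT hx
      · exact hW2 i y hy hyT
    · rintro j hij y (rfl | hy) (hy' | hy')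
      · rfl
      · rfl
      · exact hy'
      · exact absurd (hQd i j y (hW1 i hy) (hW1 j hy')) hij

end Menger

end Fans

/-! ### Partial colorings and consequences of minimality -/

section Colorings

variable {V : Type}

/-- `c` is a proper 4-coloring of the subgraph of `G` induced by `A`. -/
def Col (G : SimpleGraph V) (A : Set V) (c : V → Fin 4) : Prop :=
  ∀ a ∈ A, ∀ b ∈ A, G.Adj a b → c a ≠ c b

theorem Col.mono {G : SimpleGraph V} {A B : Set V} {c : V → Fin 4} (h : Col G A c) (hB : B ⊆ A) :
    Col G B c := fun a ha b hb => h a (hB ha) b (hB hb)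

theorem Col.perm {G : SimpleGraph V} {A : Set V} {c : V → Fin 4} (h : Col G A c)
    (σ : Equiv.Perm (Fin 4)) : Col G A (fun v => σ (c v)) :=
  fun a ha b hb hab he => h a ha b hb hab (σ.injective he)

/-- A separation of `G` given by its two (overlapping) sides. -/
structure Separ (G : SimpleGraph V) (A B : Set V) : Prop where
  union : ∀ v, v ∈ A ∨ v ∈ B
  edge : ∀ a b, G.Adj a b → (a ∈ A ∧ b ∈ A) ∨ (a ∈ B ∧ b ∈ B)
  left : ∃ v, v ∈ A ∧ v ∉ B
  right : ∃ v, v ∈ B ∧ v ∉ A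

theorem Separ.symm {G : SimpleGraph V} {A B : Set V} (h : Separ G A B) : Separ G B A :=
  ⟨fun v => (h.union v).symm, fun a b hab => (h.edge a b hab).symm, h.right, h.left⟩

theorem Separ.ne_univ {G : SimpleGraph V} {A B : Set V} (h : Separ G A B) : A ≠ Set.univ := by
  rintro rfl
  obtain ⟨v, _, h⟩ := h.right
  exact h trivial

/-- Two colorings with the same pattern of equalities on `s` differ there by a permutation of
the colors. -/
theorem exists_perm (s : Set V) (f g : V → Fin 4)
    (h : ∀ u ∈ s, ∀ v ∈ s, f u = f v ↔ g u = g v) :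
    ∃ σ : Equiv.Perm (Fin 4), ∀ u ∈ s, σ (f u) = g u := by
  classical
  have h1 : ∀ x : {x // x ∈ f '' s}, ∃ u ∈ s, f u = x := fun x => x.2
  choose r hr hr' using h1
  let φ : {x // x ∈ f '' s} → {x // x ∈ g '' s} := fun x => ⟨g (r x), _, hr x, rfl⟩
  have hφ : Function.Bijective φ := by
    constructor
    · intro x y hxy
      have h2 : g (r x) = g (r y) := congrArg Subtype.val hxy
      apply Subtype.ext
      rw [← hr' x, ← hr' y]
      exact (h _ (hr x) _ (hr y)).2 h2
    · rintro ⟨_, u, hu, rfl⟩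
      refine ⟨⟨f u, u, hu, rfl⟩, ?_⟩
      apply Subtype.ext
      exact (h _ (hr _) _ hu).1 (hr' _)
  refine ⟨(Equiv.ofBijective φ hφ).extendSubtype, ?_⟩
  intro u hu
  have hm : f u ∈ f '' s := ⟨u, hu, rfl⟩
  rw [Equiv.extendSubtype_apply_of_mem (Equiv.ofBijective φ hφ) (f u) hm]
  exact (h _ (hr _) _ hu).1 (hr' _)

/-- Colorings of the two sides of a separation with the same pattern of equalities on the
common vertices combine to a coloring of the whole graph. -/
theorem glue {G : SimpleGraph V} {A B : Set V} (hS : Separ G A B) {cA cB : V → Fin 4}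
    (hA : Col G A cA) (hB : Col G B cB)
    (h : ∀ u, u ∈ A → u ∈ B → ∀ v, v ∈ A → v ∈ B → (cA u = cA v ↔ cB u = cB v)) :
    G.Colorable 4 := by
  classical
  obtain ⟨σ, hσ⟩ := exists_perm (A ∩ B) cB cA
    (fun u hu v hv => (h u hu.1 hu.2 v hv.1 hv.2).symm)
  refine ⟨Coloring.mk (fun v => if v ∈ A then cA v else σ (cB v)) ?_⟩
  have hAe : ∀ v, v ∈ A → (if v ∈ A then cA v else σ (cB v)) = cA v := fun v hv => if_pos hv
  have hBe : ∀ v, v ∈ B → (if v ∈ A then cA v else σ (cB v)) = σ (cB v) := by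
    intro v hv
    by_cases hvA : v ∈ A
    · rw [if_pos hvA, hσ v ⟨hvA, hv⟩]
    · rw [if_neg hvA]
  intro a b hab
  rcases hS.edge a b hab with ⟨ha, hb⟩ | ⟨ha, hb⟩
  · rw [hAe a ha, hAe b hb]; exact hA a ha b hb hab
  · rw [hBe a ha, hBe b hb]; exact fun h => hB a ha b hb hab (σ.injective h)

theorem Linked.image {W : Type} {H : SimpleGraph V} {H' : SimpleGraph W} (f : V → W)
    (hf : ∀ a b, H.Adj a b → H'.Adj (f a) (f b)) {U : Set V} {u v : V} (h : Linked H U u v) :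
    Linked H' (f '' U) (f u) (f v) := by
  refine h.ind (P := fun v => Linked H' (f '' U) (f u) (f v)) (Linked.refl ⟨u, h.1, rfl⟩) ?_
  intro a b _ hP hab hb
  exact hP.tail (hf _ _ hab) ⟨b, hb, rfl⟩

/-- Minimality, for a graph on the same vertex type whose edges live on a proper subset `A`. -/
theorem hajos_color [Fintype V] {G : SimpleGraph V} (hG : IsHajos G) (H : SimpleGraph V)
    {A : Set V} (hA : A ≠ Set.univ) (hE : ∀ a b, H.Adj a b → a ∈ A ∧ b ∈ A)
    (hK : ¬ HasK5Subdivision H) : ∃ c : V → Fin 4, ∀ a b, H.Adj a b → c a ≠ c b := by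
  classical
  have hlt : A.ncard < Fintype.card V := by
    rw [← Nat.card_eq_fintype_card, ← Set.ncard_univ]
    exact Set.ncard_lt_ncard (Set.ssubset_univ_iff.2 hA)
  obtain ⟨e⟩ : Nonempty (A ≃ Fin A.ncard) := ⟨Finite.equivFinOfCardEq (Nat.card_coe_set_eq A)⟩
  have hf : Function.Injective (fun i => (e.symm i : V)) :=
    Subtype.val_injective.comp e.symm.injective
  rcases hG.2.2 _ hlt (H.comap fun i => (e.symm i : V)) with h | ⟨⟨C⟩⟩
  · exfalso
    apply hK
    rw [hasK5_iff] at h ⊢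
    obtain ⟨b, hb, U, h1, h2, h3⟩ := h
    refine ⟨fun k => e.symm (b k), hf.comp hb, fun i j => (fun i => (e.symm i : V)) '' U i j,
      ?_, ?_, ?_⟩
    · intro i j hij
      exact (h1 i j hij).image (fun i => (e.symm i : V)) fun _ _ h => h
    · rintro i j hij k ⟨x, hx, hxk⟩
      exact h2 i j hij k (hf hxk ▸ hx)
    · rintro i j i' j' hij hij' hne _ ⟨x, hx, rfl⟩ ⟨y, hy, hyx⟩
      obtain rfl := hf hyx
      obtain ⟨k, hk⟩ := h3 i j i' j' hij hij' hne y hx hy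
      exact ⟨k, by simp only [hk]⟩
  · refine ⟨fun v => if h : v ∈ A then C (e ⟨v, h⟩) else 0, ?_⟩
    intro a b hab
    obtain ⟨ha, hb⟩ := hE a b hab
    simp only [ha, hb, dif_pos]
    apply C.map_rel
    simpa using hab

/-- `G[A]` together with the extra edges `p i — q i`. -/
def addLinks {ι : Type} (G : SimpleGraph V) (A : Set V) (p q : ι → V) : SimpleGraph V where
  Adj a b := a ≠ b ∧ ((G.Adj a b ∧ a ∈ A ∧ b ∈ A) ∨
    ∃ i, (a = p i ∧ b = q i) ∨ (a = q i ∧ b = p i))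
  symm := ⟨fun a b h => ⟨h.1.symm, by
    rcases h.2 with h | ⟨i, h⟩
    · exact Or.inl ⟨h.1.symm, h.2.2, h.2.1⟩
    · exact Or.inr ⟨i, by tauto⟩⟩⟩
  loopless := ⟨fun _ h => h.1 rfl⟩

/-- If the added edges are realized in `G` by links running and disjoint outside `A`, a `K5`-subdivision of
the augmented graph lifts to one of `G`. -/
theorem lift_k5 {ι : Type} (G : SimpleGraph V) (A : Set V) (p q : ι → V) (W : ι → Set V)
    (hp : ∀ i, p i ∈ A) (hq : ∀ i, q i ∈ A)
    (hW : ∀ i, Linked G (W i) (p i) (q i)) (hWA : ∀ i, ∀ x ∈ W i, x ∈ A → x = p i ∨ x = q i)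
    (hWd : ∀ i j, i ≠ j → ∀ x ∈ W i, x ∈ W j → x ∈ A) (hpq : ∀ i, p i ≠ q i)
    (hK : HasK5Subdivision (addLinks G A p q)) : HasK5Subdivision G := by
  rw [hasK5_iff] at hK ⊢
  obtain ⟨b, hb, U, h1, h2, h3⟩ := hK
  have hHA : ∀ u v, (addLinks G A p q).Adj u v → u ∈ A := by
    rintro u v ⟨_, h | ⟨i, ⟨rfl, rfl⟩ | ⟨rfl, rfl⟩⟩⟩
    · exact h.2.1
    · exact hp i
    · exact hq i
  have hbA : ∀ k, b k ∈ A := by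
    intro k
    by_cases hk : k = 0
    · subst hk
      obtain ⟨w, _, hw⟩ := (h1 0 1 (by decide)).exists_adj (hb.ne (by decide))
      exact hHA _ _ hw
    · obtain ⟨w, _, hw⟩ := (h1 0 k (Fin.pos_of_ne_zero hk)).symm.exists_adj (hb.ne hk)
      exact hHA _ _ hw
  let U' : Fin 5 → Fin 5 → Set V := fun i j => {x | (x ∈ U i j ∧ x ∈ A) ∨
    ∃ e, p e ∈ U i j ∧ q e ∈ U i j ∧ x ∈ W e}
  have hU' : ∀ i j x, x ∈ U' i j → x ∈ A → x ∈ U i j := by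
    rintro i j x (h | ⟨e, hpe, hqe, hx⟩) hxA
    · exact h.1
    · rcases hWA e x hx hxA with rfl | rfl
      · exact hpe
      · exact hqe
  refine ⟨b, hb, U', ?_, ?_, ?_⟩
  · intro i j hij
    refine (h1 i j hij).map (Or.inl ⟨(h1 i j hij).left, hbA i⟩) ?_
    rintro u v hu hv ⟨_, h | ⟨e, ⟨rfl, rfl⟩ | ⟨rfl, rfl⟩⟩⟩ -
    · exact Linked.adj (Or.inl ⟨hu, h.2.1⟩) (Or.inl ⟨hv, h.2.2⟩) h.1
    · exact (hW e).mono fun x hx => Or.inr ⟨e, hu, hv, hx⟩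
    · exact (hW e).symm.mono fun x hx => Or.inr ⟨e, hv, hu, hx⟩
  · intro i j hij k hk
    exact h2 i j hij k (hU' i j _ hk (hbA k))
  · intro i j i' j' hij hij' hne x hx hx'
    by_cases hxA : x ∈ A
    · exact h3 i j i' j' hij hij' hne x (hU' _ _ _ hx hxA) (hU' _ _ _ hx' hxA)
    · exfalso
      rcases hx with hx | ⟨e, hpe, hqe, hx⟩
      · exact hxA hx.2
      rcases hx' with hx' | ⟨e', hpe', hqe', hx'⟩
      · exact hxA hx'.2
      obtain rfl : e = e' := by
        by_contra hee
        exact hxA (hWd e e' hee x hx hx')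
      obtain ⟨k, hk⟩ := h3 i j i' j' hij hij' hne _ hpe hpe'
      obtain ⟨l, hl⟩ := h3 i j i' j' hij hij' hne _ hqe hqe'
      have hkl : k ≠ l := by
        rintro rfl
        exact hpq e (hk.symm.trans hl)
      rw [← hk] at hpe hpe'
      rw [← hl] at hqe hqe'
      have a1 := h2 i j hij k hpe
      have a2 := h2 i j hij l hqe
      have a3 := h2 i' j' hij' k hpe'
      have a4 := h2 i' j' hij' l hqe'
      have : i = i' ∧ j = j' := by omega
      exact hne (by rw [this.1, this.2])

/-- If added edges `p i — q i` on `A` are realized in `G` by links outside `A`, disjoint there, then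
`G[A]` has a 4-coloring that is also proper on the added edges. -/
theorem exists_col {ι : Type} [Fintype V] {G : SimpleGraph V} (hG : IsHajos G) {A : Set V}
    (hA : A ≠ Set.univ) (p q : ι → V) (W : ι → Set V)
    (hp : ∀ i, p i ∈ A) (hq : ∀ i, q i ∈ A)
    (hW : ∀ i, Linked G (W i) (p i) (q i)) (hWA : ∀ i, ∀ x ∈ W i, x ∈ A → x = p i ∨ x = q i)
    (hWd : ∀ i j, i ≠ j → ∀ x ∈ W i, x ∈ W j → x ∈ A) (hpq : ∀ i, p i ≠ q i) :
    ∃ c, Col G A c ∧ ∀ i, c (p i) ≠ c (q i) := by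
  obtain ⟨c, hc⟩ := hajos_color hG (addLinks G A p q) hA (by
    rintro u v ⟨_, h | ⟨i, ⟨rfl, rfl⟩ | ⟨rfl, rfl⟩⟩⟩
    · exact h.2
    · exact ⟨hp i, hq i⟩
    · exact ⟨hq i, hp i⟩) (fun h => hG.1 (lift_k5 G A p q W hp hq hW hWA hWd hpq h))
  refine ⟨c, ?_, ?_⟩
  · intro a ha b hb hab
    exact hc a b ⟨hab.ne, Or.inl ⟨hab, ha, hb⟩⟩
  · intro i
    exact hc _ _ ⟨hpq i, Or.inr ⟨i, Or.inl ⟨rfl, rfl⟩⟩⟩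

section

variable [Fintype V] {G : SimpleGraph V}

theorem col_none (hG : IsHajos G) {A : Set V} (hA : A ≠ Set.univ) : ∃ c, Col G A c := by
  obtain ⟨c, hc, _⟩ := exists_col (ι := Fin 0) hG hA (fun i => i.elim0) (fun i => i.elim0)
    (fun i => i.elim0) (fun i => i.elim0) (fun i => i.elim0) (fun i => i.elim0)
    (fun i => i.elim0) (fun i => i.elim0) (fun i => i.elim0)
  exact ⟨c, hc⟩

theorem col_one (hG : IsHajos G) {A : Set V} (hA : A ≠ Set.univ) {p q : V} {W : Set V}
    (hp : p ∈ A) (hq : q ∈ A) (hpq : p ≠ q) (hW : Linked G W p q)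
    (hWA : ∀ x ∈ W, x ∈ A → x = p ∨ x = q) : ∃ c, Col G A c ∧ c p ≠ c q := by
  obtain ⟨c, hc, h⟩ := exists_col (ι := Unit) hG hA (fun _ => p) (fun _ => q)
    (fun _ => W) (fun _ => hp) (fun _ => hq) (fun _ => hW) (fun _ => hWA)
    (fun i j h => absurd rfl h) (fun _ => hpq)
  exact ⟨c, hc, h ()⟩

theorem col_two (hG : IsHajos G) {A : Set V} (hA : A ≠ Set.univ) {m y z : V} {Wy Wz : Set V}
    (hm : m ∈ A) (hy : y ∈ A) (hz : z ∈ A) (hmy : m ≠ y) (hmz : m ≠ z)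
    (hWy : Linked G Wy m y) (hWz : Linked G Wz m z)
    (hWyA : ∀ x ∈ Wy, x ∈ A → x = m ∨ x = y) (hWzA : ∀ x ∈ Wz, x ∈ A → x = m ∨ x = z)
    (hd : ∀ x ∈ Wy, x ∈ Wz → x ∈ A) : ∃ c, Col G A c ∧ c m ≠ c y ∧ c m ≠ c z := by
  obtain ⟨c, hc, h⟩ := exists_col (ι := Bool) hG hA (fun _ => m) (fun i => if i then y else z)
    (fun i => if i then Wy else Wz) (fun _ => hm) (by simp [hy, hz])
    (by simp [hWy, hWz]) (by simpa using ⟨hWzA, hWyA⟩)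
    (by simpa using ⟨fun x h1 h2 => hd x h2 h1, hd⟩) (by simp [hmy, hmz])
  exact ⟨c, hc, h true, h false⟩

theorem col_three (hG : IsHajos G) {A : Set V} (hA : A ≠ Set.univ) {x y z : V}
    {P Q R : Set V} (hx : x ∈ A) (hy : y ∈ A) (hz : z ∈ A) (hxy : x ≠ y) (hyz : y ≠ z)
    (hxz : x ≠ z) (hP : Linked G P x y) (hQ : Linked G Q y z) (hR : Linked G R x z)
    (hPA : ∀ v ∈ P, v ∈ A → v = x ∨ v = y) (hQA : ∀ v ∈ Q, v ∈ A → v = y ∨ v = z)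
    (hRA : ∀ v ∈ R, v ∈ A → v = x ∨ v = z) (hPQ : ∀ v ∈ P, v ∈ Q → v ∈ A)
    (hPR : ∀ v ∈ P, v ∈ R → v ∈ A) (hQR : ∀ v ∈ Q, v ∈ R → v ∈ A) :
    ∃ c, Col G A c ∧ c x ≠ c y ∧ c y ≠ c z ∧ c x ≠ c z := by
  obtain ⟨c, hc, h⟩ := exists_col (ι := Fin 3) hG hA ![x, y, x] ![y, z, z] ![P, Q, R]
    (by simp [Fin.forall_fin_succ, *]) (by simp [Fin.forall_fin_succ, *])
    (by simp [Fin.forall_fin_succ, *]) (by simpa [Fin.forall_fin_succ] using ⟨hPA, hQA, hRA⟩)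
    (by simpa [Fin.forall_fin_succ] using ⟨⟨hPQ, hPR⟩, ⟨fun v h1 h2 => hPQ v h2 h1, hQR⟩,
      fun v h1 h2 => hPR v h2 h1, fun v h1 h2 => hQR v h2 h1⟩)
    (by simp [Fin.forall_fin_succ, *])
  exact ⟨c, hc, h 0, h 1, h 2⟩

end

end Colorings

/-! ### 3-connectedness and separations of order three -/

section Separations

variable {V : Type}

/-- No separation has order at most two. -/
def Conn3 (G : SimpleGraph V) : Prop := ∀ A B, Separ G A B → 3 ≤ (A ∩ B).ncard

theorem Linked.inter {H : SimpleGraph V} {A U : Set V} {u v : V} (h : Linked H U u v)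
    (hu : u ∈ A) (hE : ∀ a b, H.Adj a b → b ∈ A) : Linked H (U ∩ A) u v := by
  refine h.ind (P := fun v => Linked H (U ∩ A) u v) (Linked.refl ⟨h.1, hu⟩) ?_
  intro a b _ hP hab hb
  exact hP.tail hab ⟨hb, hE a b hab⟩

/-- In a separation of minimal order every common vertex has a neighbour strictly inside
each side. -/
theorem attach [Finite V] {G : SimpleGraph V} {A B : Set V} (hS : Separ G A B)
    (hmin : ∀ A' B', Separ G A' B' → (A ∩ B).ncard ≤ (A' ∩ B').ncard) {a u : V}
    (ha : a ∈ A) (haB : a ∉ B) (huA : u ∈ A) (huB : u ∈ B) :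
    ∃ d ∈ A, d ∉ B ∧ G.Adj u d ∧ Linked G (A \ B) a d := by
  by_contra hcon
  push Not at hcon
  have hCA : ∀ d, Linked G (A \ B) a d → d ∈ A ∧ d ∉ B := fun d hd => hd.right
  have hcon' : ∀ d, Linked G (A \ B) a d → ¬ G.Adj u d := fun d hd hud =>
    hcon d (hCA d hd).1 (hCA d hd).2 hud hd
  have key : ∀ d e, Linked G (A \ B) a d → G.Adj d e →
      (Linked G (A \ B) a e ∨ (e ∈ A ∧ e ∈ B ∧ e ≠ u)) := by
    intro d e hd hde
    have heA : e ∈ A := by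
      rcases hS.edge d e hde with h | h
      · exact h.2
      · exact absurd h.1 (hCA d hd).2
    by_cases heB : e ∈ B
    · refine Or.inr ⟨heA, heB, ?_⟩
      rintro rfl
      exact hcon' d hd hde.symm
    · exact Or.inl (hd.tail hde ⟨heA, heB⟩)
  have hS' : Separ G {v | Linked G (A \ B) a v ∨ (v ∈ A ∧ v ∈ B ∧ v ≠ u)}
      {v | ¬ Linked G (A \ B) a v} := by
    refine ⟨?_, ?_, ?_, ?_⟩
    · intro v
      by_cases h : Linked G (A \ B) a v
      · exact Or.inl (Or.inl h)
      · exact Or.inr h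
    · intro d e hde
      by_cases hd : Linked G (A \ B) a d
      · exact Or.inl ⟨Or.inl hd, key d e hd hde⟩
      · by_cases he : Linked G (A \ B) a e
        · exact Or.inl ⟨key e d he hde.symm, Or.inl he⟩
        · exact Or.inr ⟨hd, he⟩
    · exact ⟨a, Or.inl (Linked.refl ⟨ha, haB⟩), fun h => h (Linked.refl ⟨ha, haB⟩)⟩
    · obtain ⟨b, hb, hbA⟩ := hS.right
      refine ⟨b, fun h => hbA (hCA b h).1, ?_⟩
      rintro (h | h)
      · exact hbA (hCA b h).1
      · exact hbA h.1
  have := hmin _ _ hS'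
  refine absurd this (not_le.2 (Set.ncard_lt_ncard ?_ (Set.toFinite _)))
  refine ⟨?_, fun h => ?_⟩
  · rintro v ⟨h1 | h1, h2⟩
    · exact absurd h1 h2
    · exact ⟨h1.1, h1.2.1⟩
  · obtain ⟨h1 | h1, h2⟩ := h ⟨huA, huB⟩
    · exact h2 h1
    · exact h1.2.2 rfl

/-- In a separation of minimal order two common vertices are linked through each side. -/
theorem side_link [Finite V] {G : SimpleGraph V} {A B : Set V} (hS : Separ G A B)
    (hmin : ∀ A' B', Separ G A' B' → (A ∩ B).ncard ≤ (A' ∩ B').ncard) {u v : V}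
    (huA : u ∈ A) (huB : u ∈ B) (hvA : v ∈ A) (hvB : v ∈ B) :
    ∃ W, Linked G W u v ∧ W ⊆ A ∧ ∀ x ∈ W, x ∈ B → x = u ∨ x = v := by
  obtain ⟨a, ha, haB⟩ := hS.left
  obtain ⟨d, hd, hdB, hud, hl⟩ := attach hS hmin ha haB huA huB
  obtain ⟨e, he, heB, hve, hl'⟩ := attach hS hmin ha haB hvA hvB
  refine ⟨{x | x = u ∨ x = v ∨ x ∈ A \ B}, ?_, ?_, ?_⟩
  · have h1 : Linked G {x | x = u ∨ x = v ∨ x ∈ A \ B} d e :=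
      (hl.symm.trans hl').mono fun x hx => Or.inr (Or.inr hx)
    have h2 : Linked G {x | x = u ∨ x = v ∨ x ∈ A \ B} u d :=
      Linked.adj (Or.inl rfl) h1.left hud
    exact (h2.trans h1).tail hve.symm (Or.inr (Or.inl rfl))
  · rintro x (rfl | rfl | h)
    · exact huA
    · exact hvA
    · exact h.1
  · rintro x (rfl | rfl | h) hx
    · exact Or.inl rfl
    · exact Or.inr rfl
    · exact absurd hx h.2

/-- For a separation of least order, at most two, both sides have colorings with different
colors on the common vertices, and these can be glued. -/
theorem hajos_conn3 [Fintype V] {G : SimpleGraph V} (hG : IsHajos G) : Conn3 G := by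
  by_contra hcon
  unfold Conn3 at hcon
  push Not at hcon
  have hex : ∃ m A B, Separ G A B ∧ (A ∩ B).ncard = m := by
    obtain ⟨A, B, h, _⟩ := hcon
    exact ⟨_, A, B, h, rfl⟩
  classical
  obtain ⟨A, B, hS, hm⟩ := Nat.find_spec hex
  have hmin : ∀ A' B', Separ G A' B' → (A ∩ B).ncard ≤ (A' ∩ B').ncard := by
    intro A' B' h
    rw [hm]
    exact Nat.find_min' hex ⟨A', B', h, rfl⟩
  have h2 : (A ∩ B).ncard < 3 := by
    obtain ⟨A', B', h, h'⟩ := hcon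
    exact (hmin A' B' h).trans_lt h'
  by_cases hsub : ∀ u, u ∈ A → u ∈ B → ∀ v, v ∈ A → v ∈ B → u = v
  · obtain ⟨cA, hA⟩ := col_none hG hS.ne_univ
    obtain ⟨cB, hB⟩ := col_none hG hS.symm.ne_univ
    refine hG.2.1 (glue hS hA hB fun u hu hu' v hv hv' => ?_)
    rw [hsub u hu hu' v hv hv']
    simp
  · push Not at hsub
    obtain ⟨u, hu, hu', v, hv, hv', huv⟩ := hsub
    have hAB : A ∩ B = {u, v} := by
      symm
      apply Set.eq_of_subset_of_ncard_le
      · rintro x (rfl | rfl)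
        · exact ⟨hu, hu'⟩
        · exact ⟨hv, hv'⟩
      · rw [Set.ncard_pair huv]; omega
      · exact Set.toFinite _
    obtain ⟨W, hW, _, hW'⟩ := side_link hS hmin hu hu' hv hv'
    obtain ⟨cB, hB, hBuv⟩ := col_one hG hS.symm.ne_univ hu' hv' huv hW hW'
    obtain ⟨W, hW, _, hW'⟩ := side_link hS.symm
      (fun A' B' h => by rw [Set.inter_comm]; exact hmin A' B' h) hu' hu hv' hv
    obtain ⟨cA, hA, hAuv⟩ := col_one hG hS.ne_univ hu hv huv hW hW'
    refine hG.2.1 (glue hS hA hB ?_)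
    intro a ha ha' b hb hb'
    have h1 : a ∈ A ∩ B := ⟨ha, ha'⟩
    have h2 : b ∈ A ∩ B := ⟨hb, hb'⟩
    rw [hAB] at h1 h2
    rcases h1 with rfl | rfl <;> rcases h2 with rfl | rfl <;> grind

/-- A separation of order three, with its three common vertices named. -/
structure Sep3 (G : SimpleGraph V) (A B : Set V) (x y z : V) : Prop extends Separ G A B where
  hxy : x ≠ y
  hyz : y ≠ z
  hxz : x ≠ z
  xA : x ∈ A
  xB : x ∈ B
  yA : y ∈ A
  yB : y ∈ B
  zA : z ∈ A
  zB : z ∈ B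
  inter : ∀ v, v ∈ A → v ∈ B → v = x ∨ v = y ∨ v = z

/-- `G[A]` has a 4-coloring giving `x, y, z` three different colors. -/
def RCol (G : SimpleGraph V) (A : Set V) (x y z : V) : Prop :=
  ∃ c, Col G A c ∧ c x ≠ c y ∧ c y ≠ c z ∧ c x ≠ c z

/-- `G[A]` has a 4-coloring giving `y, z` the same color and `x` another one. -/
def PCol (G : SimpleGraph V) (A : Set V) (x y z : V) : Prop :=
  ∃ c, Col G A c ∧ c y = c z ∧ c x ≠ c y

/-- Inside `B` there are links from `m` to `a` and to `b` that meet only in `m`. -/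
def TwoPath (G : SimpleGraph V) (B : Set V) (m a b : V) : Prop :=
  ∃ Wa Wb : Set V, Wa ⊆ B ∧ Wb ⊆ B ∧ Linked G Wa m a ∧ Linked G Wb m b ∧ b ∉ Wa ∧ a ∉ Wb ∧
    ∀ v ∈ Wa, v ∈ Wb → v = m

/-- Each of `x, y, z` is the middle of a two-path to the other two inside `B`. -/
def Good (G : SimpleGraph V) (B : Set V) (x y z : V) : Prop :=
  TwoPath G B x y z ∧ TwoPath G B y z x ∧ TwoPath G B z x y

section

variable {G : SimpleGraph V} {A B : Set V} {x y z : V}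

theorem Sep3.symm' (h : Sep3 G A B x y z) : Sep3 G B A x y z :=
  ⟨h.toSepar.symm, h.hxy, h.hyz, h.hxz, h.xB, h.xA, h.yB, h.yA, h.zB, h.zA,
    fun v hv hv' => h.inter v hv' hv⟩

theorem Sep3.rot (h : Sep3 G A B x y z) : Sep3 G A B y z x :=
  ⟨h.toSepar, h.hyz, h.hxz.symm, h.hxy.symm, h.yA, h.yB, h.zA, h.zB, h.xA, h.xB,
    fun v hv hv' => by have := h.inter v hv hv'; tauto⟩

theorem Sep3.swap (h : Sep3 G A B x y z) : Sep3 G A B x z y :=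
  ⟨h.toSepar, h.hxz, h.hyz.symm, h.hxy, h.xA, h.xB, h.zA, h.zB, h.yA, h.yB,
    fun v hv hv' => by have := h.inter v hv hv'; tauto⟩

theorem RCol.rot (h : RCol G A x y z) : RCol G A y z x := by
  obtain ⟨c, hc, h1, h2, h3⟩ := h
  exact ⟨c, hc, h2, h3.symm, h1.symm⟩

theorem RCol.swap (h : RCol G A x y z) : RCol G A x z y := by
  obtain ⟨c, hc, h1, h2, h3⟩ := h
  exact ⟨c, hc, h3, h2.symm, h1⟩

theorem PCol.swap (h : PCol G A x y z) : PCol G A x z y := by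
  obtain ⟨c, hc, h1, h2⟩ := h
  exact ⟨c, hc, h1.symm, h1 ▸ h2⟩

theorem TwoPath.swap (h : TwoPath G B x y z) : TwoPath G B x z y := by
  obtain ⟨Wa, Wb, h1, h2, h3, h4, h5, h6, h7⟩ := h
  exact ⟨Wb, Wa, h2, h1, h4, h3, h6, h5, fun v hv hv' => h7 v hv' hv⟩

theorem Good.rot (h : Good G B x y z) : Good G B y z x := ⟨h.2.1, h.2.2, h.1⟩

theorem Good.swap (h : Good G B x y z) : Good G B x z y := ⟨h.1.swap, h.2.2.swap, h.2.1.swap⟩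

theorem Sep3.ncard [Finite V] (h : Sep3 G A B x y z) : (A ∩ B).ncard = 3 := by
  have : A ∩ B = {x, y, z} := by
    ext v
    constructor
    · rintro ⟨h1, h2⟩
      simpa using h.inter v h1 h2
    · rintro (rfl | rfl | rfl)
      · exact ⟨h.xA, h.xB⟩
      · exact ⟨h.yA, h.yB⟩
      · exact ⟨h.zA, h.zB⟩
  rw [this, Set.ncard_eq_three]
  exact ⟨x, y, z, h.hxy, h.hxz, h.hyz, rfl⟩

theorem Sep3.min [Finite V] (hC : Conn3 G) (h : Sep3 G A B x y z) :
    ∀ A' B', Separ G A' B' → (A ∩ B).ncard ≤ (A' ∩ B').ncard := by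
  intro A' B' hS
  rw [h.ncard]
  exact hC _ _ hS

/-- Two colorings of the sides of a 3-separation with the same pattern are contradictory. -/
theorem Sep3.not_R [Fintype V] (hG : IsHajos G) (h : Sep3 G A B x y z) (hA : RCol G A x y z)
    (hB : RCol G B x y z) : False := by
  obtain ⟨c, hc, h1, h2, h3⟩ := hA
  obtain ⟨c', hc', h1', h2', h3'⟩ := hB
  refine hG.2.1 (glue h.toSepar hc hc' ?_)
  intro u hu hu' v hv hv'
  rcases h.inter u hu hu' with rfl | rfl | rfl <;> rcases h.inter v hv hv' with rfl | rfl | rfl <;>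
    simp [*, Ne.symm, h1.symm, h2.symm, h3.symm, h1'.symm, h2'.symm, h3'.symm]

theorem Sep3.not_P [Fintype V] (hG : IsHajos G) (h : Sep3 G A B x y z) (hA : PCol G A x y z)
    (hB : PCol G B x y z) : False := by
  obtain ⟨c, hc, h1, h2⟩ := hA
  obtain ⟨c', hc', h1', h2'⟩ := hB
  refine hG.2.1 (glue h.toSepar hc hc' ?_)
  intro u hu hu' v hv hv'
  rcases h.inter u hu hu' with rfl | rfl | rfl <;> rcases h.inter v hv hv' with rfl | rfl | rfl <;>
    grind

/-- A coloring of one side separating a prescribed pair of the three common vertices. -/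
theorem Sep3.col_pair [Fintype V] (hG : IsHajos G) (hC : Conn3 G) (h : Sep3 G A B x y z)
    (hR : ¬ RCol G A x y z) : PCol G A x y z ∨ PCol G A y z x := by
  obtain ⟨W, hW, _, hW'⟩ := side_link h.toSepar.symm (h.symm'.min hC) h.xB h.xA h.yB h.yA
  obtain ⟨c, hc, hxy⟩ := col_one hG h.ne_univ h.xA h.yA h.hxy hW hW'
  by_cases h1 : c y = c z
  · exact Or.inl ⟨c, hc, h1, hxy⟩
  by_cases h2 : c x = c z
  · exact Or.inr ⟨c, hc, h2.symm, h1⟩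
  · exact absurd ⟨c, hc, hxy, h1, h2⟩ hR

/-- If neither side had a rainbow coloring, each would realize at least two of the three patterns
with exactly two equal colors, so they would share one. -/
theorem Sep3.exists_R [Fintype V] (hG : IsHajos G) (hC : Conn3 G) (h : Sep3 G A B x y z) :
    RCol G A x y z ∨ RCol G B x y z := by
  by_contra hcon
  push Not at hcon
  have a1 := h.col_pair hG hC hcon.1
  have a2 := h.rot.col_pair hG hC (fun h => hcon.1 h.rot.rot)
  have a3 := h.rot.rot.col_pair hG hC (fun h => hcon.1 h.rot)
  have b1 := h.symm'.col_pair hG hC hcon.2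
  have b2 := h.symm'.rot.col_pair hG hC (fun h => hcon.2 h.rot.rot)
  have b3 := h.symm'.rot.rot.col_pair hG hC (fun h => hcon.2 h.rot)
  have c1 := h.not_P hG
  have c2 := h.rot.not_P hG
  have c3 := h.rot.rot.not_P hG
  tauto

/-- A two-path in `B` lets the two-edge path through `x` be added to `G[A]`. -/
theorem Sep3.col_middle [Fintype V] (hG : IsHajos G) (h : Sep3 G A B x y z)
    (hT : TwoPath G B x y z) (hR : ¬ RCol G A x y z) : PCol G A x y z := by
  obtain ⟨Wa, Wb, h1, h2, h3, h4, h5, h6, h7⟩ := hT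
  obtain ⟨c, hc, hxy, hxz⟩ := col_two hG h.ne_univ h.xA h.yA h.zA h.hxy h.hxz h3 h4
    (by
      intro v hv hvA
      rcases h.inter v hvA (h1 hv) with rfl | rfl | rfl
      · exact Or.inl rfl
      · exact Or.inr rfl
      · exact absurd hv h5)
    (by
      intro v hv hvA
      rcases h.inter v hvA (h2 hv) with rfl | rfl | rfl
      · exact Or.inl rfl
      · exact absurd hv h6
      · exact Or.inr rfl)
    (fun v hv hv' => h7 v hv hv' ▸ h.xA)
  by_cases h1 : c y = c z
  · exact ⟨c, hc, h1, hxy⟩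
  · exact absurd ⟨c, hc, hxy, h1, hxz⟩ hR

/-- If `x` is not the middle of a two-path in `A`, it has just one neighbour in `A`. -/
theorem Sep3.deg [Fintype V] (hC : Conn3 G) (h : Sep3 G A B x y z)
    (hT : ¬ TwoPath G A x y z) : ∃ c ∈ A, c ∉ B ∧ G.Adj x c ∧ ∀ w ∈ A, G.Adj x w → w = c := by
  have hcut : ∃ c, c ≠ x ∧ ¬ Linked (restr G A) {c}ᶜ x y ∧ ¬ Linked (restr G A) {c}ᶜ x z := by
    by_contra hcon
    push Not at hcon
    obtain ⟨e, Q, he, hQ⟩ := menger_fan 2 (restr G A) x {y, z}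
      (by simp [h.hxy, h.hxz]) (by
        intro S hxS hS
        obtain ⟨c, hcx, hSc⟩ : ∃ c, c ≠ x ∧ S ⊆ {c} := by
          rcases Nat.lt_or_ge S.ncard 1 with h0 | h1
          · have : S = ∅ := (Set.ncard_eq_zero (Set.toFinite _)).1 (by omega)
            exact ⟨y, h.hxy.symm, by simp [this]⟩
          · obtain ⟨c, rfl⟩ := Set.ncard_eq_one.1 (show S.ncard = 1 by omega)
            exact ⟨c, fun h => hxS (by simp [h]), subset_rfl⟩
        by_cases hl : Linked (restr G A) {c}ᶜ x y
        · exact ⟨y, by simp, hl.mono (Set.compl_subset_compl.2 hSc)⟩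
        · exact ⟨z, by simp, (hcon c hcx hl).mono (Set.compl_subset_compl.2 hSc)⟩)
    have hl : ∀ i, Linked G (Q i ∩ A) x (e i) := fun i =>
      ((hQ i).2.1.inter h.xA (fun a b hab => hab.2.2)).mono' (restr_le _ _)
    have h01 : e 0 ≠ e 1 := he.ne (by decide)
    have hd := (hQ 0).2.2.2 1 (by decide)
    rcases (hQ 0).1 with h0 | h0 <;> rcases (hQ 1).1 with h1 | h1
    · exact h01 (h0.trans h1.symm)
    · refine hT ⟨Q 0 ∩ A, Q 1 ∩ A, Set.inter_subset_right, Set.inter_subset_right,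
        h0 ▸ hl 0, h1 ▸ hl 1, ?_, ?_, fun v hv hv' => hd v hv.1 hv'.1⟩
      · intro hz
        exact h.hyz (((hQ 0).2.2.1 z hz.1 (by simp)).trans h0).symm
      · intro hy
        exact h.hyz (((hQ 1).2.2.1 y hy.1 (by simp)).trans h1)
    · refine hT ⟨Q 1 ∩ A, Q 0 ∩ A, Set.inter_subset_right, Set.inter_subset_right,
        h1 ▸ hl 1, h0 ▸ hl 0, ?_, ?_, fun v hv hv' => hd v hv'.1 hv.1⟩
      · intro hz
        exact h.hyz (((hQ 1).2.2.1 z hz.1 (by simp)).trans h1).symm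
      · intro hy
        exact h.hyz (((hQ 0).2.2.1 y hy.1 (by simp)).trans h0)
    · exact h01 (h0.trans h1.symm)
  obtain ⟨c, hcx, hy, hz⟩ := hcut
  obtain ⟨a, ha, haB⟩ := h.left
  obtain ⟨d, hdA, hdB, hxd, _⟩ := attach h.toSepar (h.min hC) ha haB h.xA h.xB
  by_cases hall : ∀ w ∈ A, G.Adj x w → w = c
  · have hdc := hall d hdA hxd
    subst hdc
    exact ⟨d, hdA, hdB, hxd, hall⟩
  exfalso
  push Not at hall
  obtain ⟨w, hwA, hxw, hwc⟩ := hall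
  have hsub : ∀ v, Linked (restr G A) {c}ᶜ x v → v ∈ A := fun v hv =>
    (hv.inter h.xA (fun a b hab => hab.2.2)).right.2
  have key : ∀ a b, Linked (restr G A) {c}ᶜ x a → a ≠ x → G.Adj a b →
      (Linked (restr G A) {c}ᶜ x b ∨ b = c) := by
    intro a b hla hax hab
    have haA := hsub a hla
    have haB : a ∉ B := by
      intro haB
      rcases h.inter a haA haB with rfl | rfl | rfl
      · exact hax rfl
      · exact hy hla
      · exact hz hla
    have hbA : b ∈ A := by
      rcases h.edge a b hab with h | h
      · exact h.2
      · exact absurd h.1 haB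
    by_cases hbc : b = c
    · exact Or.inr hbc
    · exact Or.inl (hla.tail ⟨hab, haA, hbA⟩ hbc)
  have hS' : Separ G {v | Linked (restr G A) {c}ᶜ x v ∨ v = c}
      {v | ¬ (Linked (restr G A) {c}ᶜ x v ∧ v ≠ x)} := by
    refine ⟨?_, ?_, ?_, ?_⟩
    · intro v
      simp only [Set.mem_ofPred_eq]
      tauto
    · intro a b hab
      by_cases ha : Linked (restr G A) {c}ᶜ x a ∧ a ≠ x
      · exact Or.inl ⟨Or.inl ha.1, key a b ha.1 ha.2 hab⟩
      · by_cases hb : Linked (restr G A) {c}ᶜ x b ∧ b ≠ x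
        · exact Or.inl ⟨key b a hb.1 hb.2 hab.symm, Or.inl hb.1⟩
        · exact Or.inr ⟨ha, hb⟩
    · have hl : Linked (restr G A) {c}ᶜ x w :=
        Linked.adj hcx.symm hwc ⟨hxw, h.xA, hwA⟩
      exact ⟨w, Or.inl hl, fun h => h ⟨hl, hxw.ne'⟩⟩
    · by_cases hyc : y = c
      · refine ⟨z, fun h => hz h.1, ?_⟩
        rintro (h' | h')
        · exact hz h'
        · exact h.hyz (hyc.trans h'.symm)
      · refine ⟨y, fun h => hy h.1, ?_⟩
        rintro (h' | h')
        · exact hy h'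
        · exact hyc h'
  have h3 := hC _ _ hS'
  have h4 : {v | Linked (restr G A) {c}ᶜ x v ∨ v = c} ∩
      {v | ¬ (Linked (restr G A) {c}ᶜ x v ∧ v ≠ x)} ⊆ {x, c} := by
    rintro v ⟨h1, h2⟩
    simp only [Set.mem_ofPred_eq, Set.mem_insert_iff, Set.mem_singleton_iff] at *
    tauto
  have h5 := (Set.ncard_le_ncard h4).trans (Set.ncard_insert_le _ _)
  rw [Set.ncard_singleton] at h5
  omega

theorem fourth (a b c : Fin 4) : ∃ d : Fin 4, d ≠ a ∧ d ≠ b ∧ d ≠ c := by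
  revert a b c; decide

/-- If one side of a 3-separation has an all-different coloring and `x` is not the middle of a
two-path in `B`, moving `x` out of `B` yields such a separation with a smaller side `B`. -/
theorem Sep3.shrink [Fintype V] (hG : IsHajos G) (hC : Conn3 G) (h : Sep3 G A B x y z)
    (hR : RCol G A x y z) (hT : ¬ TwoPath G B x y z) :
    ∃ A' B' x' y' z', Sep3 G A' B' x' y' z' ∧ RCol G A' x' y' z' ∧ B'.ncard < B.ncard := by
  classical
  obtain ⟨c, hcB, hcA, hxc, hc⟩ := h.symm'.deg hC hT
  have hcx : c ≠ x := fun e => hcA (e ▸ h.xA)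
  have hcy : c ≠ y := fun e => hcA (e ▸ h.yA)
  have hcz : c ≠ z := fun e => hcA (e ▸ h.zA)
  have hxy := h.hxy
  have hxz := h.hxz
  have hyz := h.hyz
  by_cases hw : ∃ w ∈ B, w ∉ A ∧ w ≠ c
  swap
  · exfalso
    push Not at hw
    refine h.not_R hG hR ⟨fun v => if v = x then 0 else if v = y then 1 else if v = z then 2 else 3,
      ?_, ?_, ?_, ?_⟩
    · have hB : ∀ a ∈ B, a = x ∨ a = y ∨ a = z ∨ a = c := by
        intro a ha
        by_cases haA : a ∈ A
        · have := h.inter a haA ha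
          tauto
        · exact Or.inr (Or.inr (Or.inr (hw a ha haA)))
      intro a ha b hb hab
      have := hab.ne
      rcases hB a ha with rfl | rfl | rfl | rfl <;> rcases hB b hb with rfl | rfl | rfl | rfl <;>
        grind
    · simp [hxy.symm]
    · simp [hxy.symm, hxz.symm, hyz.symm]
    · simp [hxz.symm, hyz.symm]
  obtain ⟨w, hwB, hwA, hwc⟩ := hw
  have h' : Sep3 G (insert c A) (B \ {x}) c y z := by
    refine ⟨⟨?_, ?_, ?_, ?_⟩, hcy, hyz, hcz, Or.inl rfl, ⟨hcB, hcx⟩, Or.inr h.yA,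
      ⟨h.yB, hxy.symm⟩, Or.inr h.zA, ⟨h.zB, hxz.symm⟩, ?_⟩
    · intro v
      rcases h.union v with hv | hv
      · exact Or.inl (Or.inr hv)
      · by_cases hvx : v = x
        · exact Or.inl (Or.inr (hvx ▸ h.xA))
        · exact Or.inr ⟨hv, hvx⟩
    · intro a b hab
      rcases h.edge a b hab with ⟨ha, hb⟩ | ⟨ha, hb⟩
      · exact Or.inl ⟨Or.inr ha, Or.inr hb⟩
      · by_cases hax : a = x
        · subst hax
          exact Or.inl ⟨Or.inr h.xA, Or.inl (hc b hb hab)⟩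
        · by_cases hbx : b = x
          · subst hbx
            exact Or.inl ⟨Or.inl (hc a ha hab.symm), Or.inr h.xA⟩
          · exact Or.inr ⟨⟨ha, hax⟩, ⟨hb, hbx⟩⟩
    · exact ⟨x, Or.inr h.xA, fun h => h.2 rfl⟩
    · refine ⟨w, ⟨hwB, fun e => hwA (e ▸ h.xA)⟩, ?_⟩
      rintro (h | h)
      · exact hwc h
      · exact hwA h
    · rintro v (rfl | hv) hv'
      · exact Or.inl rfl
      · have := h.inter v hv hv'.1
        have h2 : v ≠ x := hv'.2
        tauto
  refine ⟨_, _, _, _, _, h', ?_, Set.ncard_lt_ncard ⟨Set.sdiff_subset, fun hs => (hs h.xB).2 rfl⟩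
    (Set.toFinite _)⟩
  rcases h'.exists_R hG hC with hR' | ⟨f, hf, h1, h2, h3⟩
  · exact hR'
  exfalso
  obtain ⟨γ, hγc, hγy, hγz⟩ := fourth (f c) (f y) (f z)
  refine h.not_R hG hR ⟨Function.update f x γ, ?_, ?_, ?_, ?_⟩
  · intro a ha b hb hab
    by_cases hax : a = x
    · subst hax
      rw [hc b hb hab]
      simpa [hcx] using hγc
    · by_cases hbx : b = x
      · subst hbx
        rw [hc a ha hab.symm]
        simpa [hcx] using hγc.symm
      · simpa [hax, hbx] using hf a ⟨ha, hax⟩ b ⟨hb, hbx⟩ hab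
  · simpa [hxy.symm] using hγy
  · simpa [hxy.symm, hxz.symm] using h2
  · simpa [hxz.symm] using hγz

/-- Repeated shrinking of `B` makes each of the three common vertices the middle of a two-path
in `B`. -/
theorem exists_good [Fintype V] (hG : IsHajos G) (hC : Conn3 G) : ∀ (n : ℕ) (A B : Set V)
    (x y z : V), B.ncard = n → Sep3 G A B x y z → RCol G A x y z →
    ∃ A B x y z, Sep3 G A B x y z ∧ RCol G A x y z ∧ Good G B x y z := by
  intro n
  induction n using Nat.strong_induction_on with
  | _ n ih =>
  intro A B x y z hn h hR
  by_cases h1 : TwoPath G B x y z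
  swap
  · obtain ⟨A', B', x', y', z', h', hR', hlt⟩ := h.shrink hG hC hR h1
    exact ih _ (hn ▸ hlt) A' B' x' y' z' rfl h' hR'
  by_cases h2 : TwoPath G B y z x
  swap
  · obtain ⟨A', B', x', y', z', h', hR', hlt⟩ := h.rot.shrink hG hC hR.rot h2
    exact ih _ (hn ▸ hlt) A' B' x' y' z' rfl h' hR'
  by_cases h3 : TwoPath G B z x y
  swap
  · obtain ⟨A', B', x', y', z', h', hR', hlt⟩ := h.rot.rot.shrink hG hC hR.rot.rot h3
    exact ih _ (hn ▸ hlt) A' B' x' y' z' rfl h' hR'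
  exact ⟨A, B, x, y, z, h, hR, h1, h2, h3⟩

end

end Separations

/-! ### Subdivided triangles and pockets in 2-connected graphs -/

section Pockets

variable {V : Type}

/-- A subdivided triangle through `x, y, z`: three links between them meeting only in the
corners. -/
def Tri (H : SimpleGraph V) (x y z : V) : Prop :=
  ∃ P Q R : Set V, Linked H P x y ∧ Linked H Q y z ∧ Linked H R x z ∧ z ∉ P ∧ x ∉ Q ∧ y ∉ R ∧
    (∀ v ∈ P, v ∈ Q → v = y) ∧ (∀ v ∈ P, v ∈ R → v = x) ∧ (∀ v ∈ Q, v ∈ R → v = z)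

/-- Deleting any one vertex leaves the rest of `A` connected in `H`. -/
def TwoConn (H : SimpleGraph V) (A : Set V) : Prop :=
  ∀ c u v, u ∈ A → v ∈ A → u ≠ c → v ≠ c → Linked H {c}ᶜ u v

theorem subset_singleton_of_small [Finite V] {S : Set V} {x a : V} (hS : S.ncard < 2)
    (hx : x ∉ S) (ha : a ≠ x) :
    ∃ c, c ≠ x ∧ S ⊆ {c} := by
  rcases Nat.lt_or_ge S.ncard 1 with h0 | h1
  · have : S = ∅ := (Set.ncard_eq_zero (Set.toFinite _)).1 (by omega)
    exact ⟨a, ha, by simp [this]⟩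
  · obtain ⟨c, rfl⟩ := Set.ncard_eq_one.1 (show S.ncard = 1 by omega)
    exact ⟨c, fun h => hx (by simp [h]), subset_rfl⟩

/-- In a 2-connected graph there are two links from `x` to different vertices of `T`, meeting
only in `x`. -/
theorem fan_two [Finite V] {H : SimpleGraph V} {A T : Set V} (hH : TwoConn H A) {x a b : V}
    (hx : x ∈ A) (ha : a ∈ A) (hb : b ∈ A) (haT : a ∈ T) (hbT : b ∈ T) (hab : a ≠ b)
    (hxT : x ∉ T) : ∃ e f Q R, e ∈ T ∧ f ∈ T ∧ e ≠ f ∧ Linked H Q x e ∧ Linked H R x f ∧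
      (∀ y ∈ Q, y ∈ T → y = e) ∧ (∀ y ∈ R, y ∈ T → y = f) ∧ ∀ y ∈ Q, y ∈ R → y = x := by
  obtain ⟨e, Q, he, hQ⟩ := menger_fan 2 H x T hxT (by
    intro S hxS hS
    obtain ⟨c, hcx, hSc⟩ := subset_singleton_of_small hS hxS (a := a) (fun h => hxT (h ▸ haT))
    by_cases hac : a = c
    · exact ⟨b, hbT, (hH c x b hx hb hcx.symm (fun h => hab (hac.trans h.symm))).mono
        (Set.compl_subset_compl.2 hSc)⟩
    · exact ⟨a, haT, (hH c x a hx ha hcx.symm hac).mono (Set.compl_subset_compl.2 hSc)⟩)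
  exact ⟨e 0, e 1, Q 0, Q 1, (hQ 0).1, (hQ 1).1, he.ne (by decide), (hQ 0).2.1, (hQ 1).2.1,
    (hQ 0).2.2.1, (hQ 1).2.2.1, (hQ 0).2.2.2 1 (by decide)⟩

section paths

variable {H : SimpleGraph V}

theorem Linked.support {u v : V} (p : H.Walk u v) : Linked H {x | x ∈ p.support} u v :=
  Linked.of_walk p fun _ h => h

/-- A path through `e` and `f` contains disjoint links from one of them to one end and from the
other to the other end. -/
theorem path_split {y z e f : V} (p : H.Walk y z) (hp : p.IsPath) (he : e ∈ p.support)
    (hf : f ∈ p.support) (hef : e ≠ f) : ∃ Pa Pb : Set V, (∀ v ∈ Pa, v ∈ p.support) ∧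
      (∀ v ∈ Pb, v ∈ p.support) ∧ (∀ v ∈ Pa, v ∉ Pb) ∧
      ((Linked H Pa y e ∧ Linked H Pb f z) ∨ (Linked H Pa y f ∧ Linked H Pb e z)) := by
  induction p with
  | nil =>
    simp only [Walk.support_nil, List.mem_singleton] at he hf
    exact absurd (he.trans hf.symm) hef
  | @cons y w z h p ih =>
    rw [Walk.cons_isPath_iff] at hp
    have hdrop : ∀ f, f ∈ p.support → ∃ Pb : Set V, (∀ v ∈ Pb, v ∈ p.support) ∧
        Linked H Pb f z := by
      intro f hf
      classical
      exact ⟨{v | v ∈ (p.dropUntil f hf).support},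
        fun v hv => p.support_dropUntil_subset_support hf hv, Linked.support _⟩
    simp only [Walk.support_cons, List.mem_cons] at he hf ⊢
    by_cases hey : e = y
    · subst hey
      have hf' : f ∈ p.support := hf.resolve_left hef.symm
      obtain ⟨Pb, h1, h2⟩ := hdrop f hf'
      refine ⟨{e}, Pb, by simp, fun v hv => Or.inr (h1 v hv), ?_,
        Or.inl ⟨Linked.refl rfl, h2⟩⟩
      rintro v rfl hv
      exact hp.2 (h1 _ hv)
    by_cases hfy : f = y
    · subst hfy
      have he' : e ∈ p.support := he.resolve_left hef
      obtain ⟨Pb, h1, h2⟩ := hdrop e he'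
      refine ⟨{f}, Pb, by simp, fun v hv => Or.inr (h1 v hv), ?_,
        Or.inr ⟨Linked.refl rfl, h2⟩⟩
      rintro v rfl hv
      exact hp.2 (h1 _ hv)
    obtain ⟨Pa, Pb, h1, h2, h3, h4⟩ := ih hp.1 (he.resolve_left hey) (hf.resolve_left hfy)
    refine ⟨insert y Pa, Pb, ?_, fun v hv => Or.inr (h2 v hv), ?_, ?_⟩
    · rintro v (rfl | hv)
      · exact Or.inl rfl
      · exact Or.inr (h1 v hv)
    · rintro v (rfl | hv) hv'
      · exact hp.2 (h2 _ hv')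
      · exact h3 v hv hv'
    · have : ∀ g, Linked H Pa w g → Linked H (insert y Pa) y g := fun g hg =>
        (Linked.adj (Set.mem_insert _ _) (Set.mem_insert_of_mem _ hg.left) h).trans
          (hg.mono (Set.subset_insert _ _))
      rcases h4 with h4 | h4
      · exact Or.inl ⟨this _ h4.1, h4.2⟩
      · exact Or.inr ⟨this _ h4.1, h4.2⟩

/-- A path through `e` splits at `e` into two links meeting only there. -/
theorem path_split_at {y z e : V} (p : H.Walk y z) (hp : p.IsPath) (he : e ∈ p.support) :
    ∃ Pa Pb : Set V, (∀ v ∈ Pa, v ∈ p.support) ∧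
      (∀ v ∈ Pb, v ∈ p.support) ∧ (∀ v ∈ Pa, v ∈ Pb → v = e) ∧
      Linked H Pa y e ∧ Linked H Pb e z := by
  induction p with
  | nil =>
    simp only [Walk.support_nil, List.mem_singleton] at he
    subst he
    exact ⟨{e}, {e}, by simp, by simp, by simp, Linked.refl rfl, Linked.refl rfl⟩
  | @cons y w z h p ih =>
    rw [Walk.cons_isPath_iff] at hp
    by_cases hey : e = y
    · subst hey
      refine ⟨{e}, {v | v ∈ (Walk.cons h p).support}, by simp, fun v hv => hv, ?_,
        Linked.refl rfl, Linked.support _⟩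
      rintro v rfl _
      rfl
    simp only [Walk.support_cons, List.mem_cons] at he ⊢
    obtain ⟨Pa, Pb, h1, h2, h3, h4, h5⟩ := ih hp.1 (he.resolve_left hey)
    refine ⟨insert y Pa, Pb, ?_, fun v hv => Or.inr (h2 v hv), ?_, ?_, h5⟩
    · rintro v (rfl | hv)
      · exact Or.inl rfl
      · exact Or.inr (h1 v hv)
    · rintro v (rfl | hv) hv'
      · exact absurd (h2 _ hv') hp.2
      · exact h3 v hv hv'
    · exact (Linked.adj (Set.mem_insert _ _) (Set.mem_insert_of_mem _ h4.left) h).trans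
          (h4.mono (Set.subset_insert _ _))

theorem path_two_nbrs {y z s : V} (p : H.Walk y z) (hp : p.IsPath) (hs : s ∈ p.support)
    (hsy : s ≠ y) (hsz : s ≠ z) :
    ∃ u v, u ≠ v ∧ u ∈ p.support ∧ v ∈ p.support ∧ H.Adj s u ∧ H.Adj s v := by
  induction p with
  | nil =>
    simp only [Walk.support_nil, List.mem_singleton] at hs
    exact absurd hs hsy
  | @cons y w z h p ih =>
    rw [Walk.cons_isPath_iff] at hp
    simp only [Walk.support_cons, List.mem_cons] at hs ⊢
    have hs' := hs.resolve_left hsy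
    by_cases hsw : s = w
    · subst hsw
      obtain ⟨v, hv, hsv⟩ := (Linked.support p).exists_adj hsz
      refine ⟨y, v, ?_, Or.inl rfl, Or.inr hv, h.symm, hsv⟩
      rintro rfl
      exact hp.2 hv
    · obtain ⟨u, v, h1, h2, h3, h4⟩ := ih hp.1 hs' hsw hsz
      exact ⟨u, v, h1, Or.inr h2, Or.inr h3, h4⟩

/-- Two links from `x` to different vertices of one of two internally disjoint `y`–`z` paths
give a subdivided triangle. -/
theorem tri_of_fan {x y z e f : V} {p p' : H.Walk y z} (hp : p.IsPath)
    (hpp : ∀ v ∈ p.support, v ∈ p'.support → v = y ∨ v = z)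
    (hxp : x ∉ p.support) (hxp' : x ∉ p'.support) {Q R : Set V} (hQ : Linked H Q x e)
    (hR : Linked H R x f) (hef : e ≠ f) (he : e ∈ p.support) (hf : f ∈ p.support)
    (hQT : ∀ v ∈ Q, v ∈ p.support ∨ v ∈ p'.support → v = e)
    (hRT : ∀ v ∈ R, v ∈ p.support ∨ v ∈ p'.support → v = f)
    (hQR : ∀ v ∈ Q, v ∈ R → v = x) : Tri H x y z := by
  have main : ∀ (e f : V) (Q R Pa Pb : Set V), Linked H Q x e → Linked H R x f →
      e ∈ p.support → f ∈ p.support →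
      (∀ v ∈ Q, v ∈ p.support ∨ v ∈ p'.support → v = e) →
      (∀ v ∈ R, v ∈ p.support ∨ v ∈ p'.support → v = f) → (∀ v ∈ Q, v ∈ R → v = x) →
      (∀ v ∈ Pa, v ∈ p.support) → (∀ v ∈ Pb, v ∈ p.support) → (∀ v ∈ Pa, v ∉ Pb) →
      Linked H Pa y e → Linked H Pb f z → Tri H x y z := by
    intro e f Q R Pa Pb hQ hR he hf hQT hRT hQR ha hb hab h1 h2
    have hye := h1.left
    have hee := h1.right
    have hff := h2.left
    have hzz := h2.right
    have hz' : z ∈ p'.support := p'.end_mem_support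
    have hy' : y ∈ p'.support := p'.start_mem_support
    refine ⟨Q ∪ Pa, {v | v ∈ p'.support}, R ∪ Pb,
      (hQ.mono Set.subset_union_left).trans (h1.symm.mono Set.subset_union_right),
      Linked.support _,
      (hR.mono Set.subset_union_left).trans (h2.mono Set.subset_union_right), ?_, hxp', ?_,
      ?_, ?_, ?_⟩
    · rintro (h | h)
      · exact hab _ (hQT z h (Or.inr hz') ▸ hee) hzz
      · exact hab _ h hzz
    · rintro (h | h)
      · exact hab _ hye (hRT y h (Or.inr hy') ▸ hff)
      · exact hab _ hye h
    · rintro v hv hv'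
      have hva : v ∈ Pa := by
        rcases hv with h | h
        · exact hQT v h (Or.inr hv') ▸ hee
        · exact h
      rcases hpp v (ha v hva) hv' with rfl | rfl
      · rfl
      · exact absurd hzz (hab _ hva)
    · rintro v (h | h) (h' | h')
      · exact hQR v h h'
      · exact absurd h' (hab _ (hQT v h (Or.inl (hb v h')) ▸ hee))
      · exact absurd (hRT v h' (Or.inl (ha v h)) ▸ hff) (hab v h)
      · exact absurd h' (hab v h)
    · rintro v hv' hv
      have hva : v ∈ Pb := by
        rcases hv with h | h
        · exact hRT v h (Or.inr hv') ▸ hff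
        · exact h
      rcases hpp v (hb v hva) hv' with rfl | rfl
      · exact absurd hva (hab _ hye)
      · rfl
  obtain ⟨Pa, Pb, h1, h2, h3, h4 | h4⟩ := path_split p hp he hf hef
  · exact main e f Q R Pa Pb hQ hR he hf hQT hRT hQR h1 h2 h3 h4.1 h4.2
  · exact main f e R Q Pa Pb hR hQ hf he hRT hQT (fun v hv hv' => hQR v hv' hv) h1 h2 h3 h4.1 h4.2

end paths

theorem pigeon_two {a b c a' b' c' : Prop} (h1 : a ∨ a') (h2 : b ∨ b') (h3 : c ∨ c')
    (h12 : ¬ (a ∧ b) ∧ ¬ (a' ∧ b')) (h13 : ¬ (a ∧ c) ∧ ¬ (a' ∧ c'))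
    (h23 : ¬ (b ∧ c) ∧ ¬ (b' ∧ c')) : False := by
  tauto

/-- A set `D ∋ x` inside `A`, avoiding `T`, whose outer boundary is contained in `{s, t}`. -/
structure Pocket (H : SimpleGraph V) (A T : Set V) (x : V) (D : Set V) (s t : V) : Prop where
  xD : x ∈ D
  sub : D ⊆ A
  disj : ∀ v ∈ D, v ∉ T
  sA : s ∈ A
  tA : t ∈ A
  sD : s ∉ D
  tD : t ∉ D
  hst : s ≠ t
  bdry : ∀ d ∈ D, ∀ w, H.Adj d w → w ∈ D ∨ w = s ∨ w = t

theorem Pocket.symm {H : SimpleGraph V} {A T : Set V} {x : V} {D : Set V} {s t : V}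
    (h : Pocket H A T x D s t) : Pocket H A T x D t s :=
  ⟨h.xD, h.sub, h.disj, h.tA, h.sA, h.tD, h.sD, h.hst.symm,
    fun d hd w hw => (h.bdry d hd w hw).imp id Or.symm⟩

/-- `s` has at least two neighbours outside `D` and at least one inside. For a boundary vertex of
a pocket this makes it the middle of a two-path outside the pocket. -/
def Anchored (H : SimpleGraph V) (D : Set V) (s : V) : Prop :=
  (∃ u v, u ≠ v ∧ u ∉ D ∧ v ∉ D ∧ H.Adj s u ∧ H.Adj s v) ∧ ∃ d ∈ D, H.Adj s d

set_option maxHeartbeats 800000 in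
/-- In a 2-connected graph without a subdivided triangle through `x, y, z`, the vertex `x` can
be cut off from `y` and `z` by two vertices `s, t`, both different from `y` and `z`. -/
theorem exists_pocket [Finite V] {H : SimpleGraph V} {A : Set V}
    (hE : ∀ a b, H.Adj a b → b ∈ A) (hH : TwoConn H A) {x y z : V} (hx : x ∈ A) (hy : y ∈ A)
    (hz : z ∈ A) (hxy : x ≠ y) (hyz : y ≠ z) (hxz : x ≠ z) (hT : ¬ Tri H x y z) :
    ∃ D s t, Pocket H A {y, z} x D s t ∧ y ≠ s ∧ y ≠ t ∧ z ≠ s ∧ z ≠ t ∧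
      Anchored H D s ∧ Anchored H D t := by
  -- two internally disjoint `y`–`z` paths
  obtain ⟨p, p', hp, hp', hpp⟩ : ∃ p p' : H.Walk y z, p.IsPath ∧ p'.IsPath ∧
      ∀ v ∈ p.support, v ∈ p'.support → v = y ∨ v = z := by
    obtain ⟨z', hz'y, hzz'⟩ := (hH y z x hz hx hyz.symm hxy).exists_adj hxz.symm
    have hz'A : z' ∈ A := hE _ _ hzz'
    have hz'y : z' ≠ y := hz'y
    have main : ∀ Q R, Linked H Q y z → Linked H R y z' → (∀ v ∈ Q, v ∈ R → v = y) →
        ∃ p p' : H.Walk y z, p.IsPath ∧ p'.IsPath ∧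
          ∀ v ∈ p.support, v ∈ p'.support → v = y ∨ v = z := by
      intro Q R hQ hR hQR
      have hR' : Linked H (insert z R) y z :=
        (hR.mono (Set.subset_insert _ _)).tail hzz'.symm (Set.mem_insert _ _)
      obtain ⟨p, hp, hpQ⟩ := hQ.exists_path
      obtain ⟨p', hp', hpR⟩ := hR'.exists_path
      refine ⟨p, p', hp, hp', fun v hv hv' => ?_⟩
      rcases hpR v hv' with h | h
      · exact Or.inr h
      · exact Or.inl (hQR v (hpQ v hv) h)
    obtain ⟨e, f, Q, R, he, hf, hef, hQ, hR, _, _, hQR⟩ := fan_two (T := {z, z'}) hH hy hz hz'A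
      (by simp) (by simp) hzz'.ne (by simp [hyz, hz'y.symm])
    rcases he with rfl | he <;> rcases hf with rfl | hf
    · exact absurd rfl hef
    · exact main Q R hQ (hf ▸ hR) hQR
    · exact main R Q hR (he ▸ hQ) (fun v hv hv' => hQR v hv' hv)
    · exact absurd (he.trans hf.symm) hef
  have hpp' : ∀ v ∈ p'.support, v ∈ p.support → v = y ∨ v = z := fun v hv hv' => hpp v hv' hv
  have notri : ∀ p p' : H.Walk y z, p.IsPath →
      (∀ v ∈ p.support, v ∈ p'.support → v = y ∨ v = z) → x ∉ p.support := by
    intro p p' hp hpp hxp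
    obtain ⟨Pa, Pb, h1, h2, h3, h4, h5⟩ := path_split_at p hp hxp
    have hza : z ∉ Pa := fun h => hxz (h3 z h h5.right).symm
    have hyb : y ∉ Pb := fun h => hxy (h3 y h4.left h).symm
    refine hT ⟨Pa, {v | v ∈ p'.support}, Pb, h4.symm, Linked.support _, h5, hza, ?_, hyb, ?_, h3,
      ?_⟩
    · intro h
      rcases hpp x hxp h with h | h
      · exact hxy h
      · exact hxz h
    · intro v hv hv'
      rcases hpp v (h1 v hv) hv' with h | h
      · exact h
      · exact absurd (h ▸ hv) hza
    · intro v hv' hv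
      rcases hpp v (h2 v hv) hv' with h | h
      · exact absurd (h ▸ hv) hyb
      · exact h
  have hxp := notri p p' hp hpp
  have hxp' := notri p' p hp' hpp'
  set T : Set V := {v | v ∈ p.support ∨ v ∈ p'.support} with hTdef
  have hyT : y ∈ T := Or.inl p.start_mem_support
  have hzT : z ∈ T := Or.inl p.end_mem_support
  have hxT : x ∉ T := by
    rintro (h | h)
    · exact hxp h
    · exact hxp' h
  -- a fan from `x` to `T` cannot have two ends on the same path
  have hK : ∀ (e f : V) (Q R : Set V), Linked H Q x e → Linked H R x f → e ≠ f →
      (∀ v ∈ Q, v ∈ T → v = e) → (∀ v ∈ R, v ∈ T → v = f) → (∀ v ∈ Q, v ∈ R → v = x) →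
      ¬ (e ∈ p.support ∧ f ∈ p.support) ∧ ¬ (e ∈ p'.support ∧ f ∈ p'.support) := by
    intro e f Q R hQ hR hef hQT hRT hQR
    refine ⟨fun h => hT ?_, fun h => hT ?_⟩
    · exact tri_of_fan hp hpp hxp hxp' hQ hR hef h.1 h.2 hQT hRT hQR
    · exact tri_of_fan hp' hpp' hxp' hxp hQ hR hef h.1 h.2 (fun v hv h => hQT v hv h.symm)
        (fun v hv h => hRT v hv h.symm) hQR
  obtain ⟨D₀, s₀, t₀, h₀⟩ : ∃ D s t, Pocket H A T x D s t := by
    by_cases hfan : ∀ S : Set V, x ∉ S → S.ncard < 3 → ∃ u ∈ T, Linked H Sᶜ x u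
    · exfalso
      obtain ⟨e, Q, he, hQ⟩ := menger_fan 3 H x T hxT hfan
      have h01 := hK _ _ _ _ (hQ 0).2.1 (hQ 1).2.1 (he.ne (by decide)) (hQ 0).2.2.1 (hQ 1).2.2.1
        ((hQ 0).2.2.2 1 (by decide))
      have h02 := hK _ _ _ _ (hQ 0).2.1 (hQ 2).2.1 (he.ne (by decide)) (hQ 0).2.2.1 (hQ 2).2.2.1
        ((hQ 0).2.2.2 2 (by decide))
      have h12 := hK _ _ _ _ (hQ 1).2.1 (hQ 2).2.1 (he.ne (by decide)) (hQ 1).2.2.1 (hQ 2).2.2.1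
        ((hQ 1).2.2.2 2 (by decide))
      have e0 : e 0 ∈ p.support ∨ e 0 ∈ p'.support := (hQ 0).1
      have e1 : e 1 ∈ p.support ∨ e 1 ∈ p'.support := (hQ 1).1
      have e2 : e 2 ∈ p.support ∨ e 2 ∈ p'.support := (hQ 2).1
      exact pigeon_two e0 e1 e2 h01 h02 h12
    · push Not at hfan
      obtain ⟨S, hxS, hS, hsep⟩ := hfan
      have hle : (S ∩ A).ncard ≤ S.ncard := Set.ncard_le_ncard Set.inter_subset_left
      have h2 : (S ∩ A).ncard = 2 := by
        by_contra hne
        obtain ⟨c, hcx, hSc⟩ := subset_singleton_of_small (S := S ∩ A) (x := x) (a := y) (by omega)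
          (fun h => hxS h.1) hxy.symm
        have main : ∀ u ∈ A, u ∈ T → u ≠ c → False := by
          intro u hu huT huc
          refine hsep u huT (((hH c x u hx hu hcx.symm huc).inter hx hE).mono ?_)
          rintro v ⟨hv, hvA⟩ hvS
          exact hv (hSc ⟨hvS, hvA⟩)
        by_cases hyc : y = c
        · exact main z hz hzT (fun h => hyz (hyc.trans h.symm))
        · exact main y hy hyT hyc
      obtain ⟨s, t, hst, hSA⟩ := Set.ncard_eq_two.1 h2
      have hs : s ∈ S ∩ A := by rw [hSA]; simp
      have ht : t ∈ S ∩ A := by rw [hSA]; simp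
      have hsub : ∀ v, Linked H Sᶜ x v → v ∈ A := fun v hv => (hv.inter hx hE).right.2
      refine ⟨reach H Sᶜ x, s, t, Linked.refl hxS, fun v hv => hsub v hv,
        fun v hv hvT => hsep v hvT hv, hs.2, ht.2, fun h => h.right hs.1, fun h => h.right ht.1,
        hst, ?_⟩
      intro d hd w hdw
      have hd : Linked H Sᶜ x d := hd
      by_cases hwS : w ∈ S
      · right
        have : w ∈ S ∩ A := ⟨hwS, hE _ _ hdw⟩
        rw [hSA] at this
        exact this
      · exact Or.inl (hd.tail hdw hwS)
  -- maximality of the pocket provides the neighbours of `s` and `t` outside it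
  obtain ⟨D, ⟨s, t, hD⟩, hmax⟩ := Set.exists_max_image {D : Set V | ∃ s t, Pocket H A T x D s t}
    Set.ncard (Set.toFinite _) ⟨D₀, s₀, t₀, h₀⟩
  -- vertices common to both paths are not on the boundary of the pocket
  have hne : ∀ u, u ∈ p.support → u ∈ p'.support → u ≠ s ∧ u ≠ t := by
    intro u hu hu'
    obtain ⟨e, f, Q, R, he, hf, hef, hQ, hR, hQT, hRT, hQR⟩ := fan_two (T := T) hH hx hy hz
      hyT hzT hyz hxT
    have hk := hK e f Q R hQ hR hef hQT hRT hQR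
    have hexit : ∀ e Q, e ∈ T → Linked H Q x e → ∃ w ∈ Q, w ∉ D ∧ (w = s ∨ w = t) := by
      intro e Q he hQ
      obtain ⟨d, w, hd, hw, hwQ, hdw, _⟩ := hQ.exit hD.xD (fun h => hD.disj e h he)
      exact ⟨w, hwQ, hw, (hD.bdry d hd w hdw).resolve_left hw⟩
    obtain ⟨w, hwQ, hwD, hw⟩ := hexit e Q he hQ
    obtain ⟨w', hwR, hwD', hw'⟩ := hexit f R hf hR
    have hww : w ≠ w' := by
      rintro rfl
      exact hwD (hQR w hwQ hwR ▸ hD.xD)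
    have hnoQ : u ∉ Q := by
      intro h
      have := hQT u h (Or.inl hu)
      subst this
      rcases hf with h | h
      · exact hk.1 ⟨hu, h⟩
      · exact hk.2 ⟨hu', h⟩
    have hnoR : u ∉ R := by
      intro h
      have := hRT u h (Or.inl hu)
      subst this
      rcases he with h | h
      · exact hk.1 ⟨h, hu⟩
      · exact hk.2 ⟨h, hu'⟩
    have hsv : ∀ v, v = s ∨ v = t → v ∈ Q ∨ v ∈ R := by
      intro v hv
      have : v = w ∨ v = w' := by
        rcases hw with rfl | rfl <;> rcases hw' with rfl | rfl <;> tauto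
      rcases this with rfl | rfl
      · exact Or.inl hwQ
      · exact Or.inr hwR
    constructor
    · rintro rfl
      rcases hsv u (Or.inl rfl) with h | h
      · exact hnoQ h
      · exact hnoR h
    · rintro rfl
      rcases hsv u (Or.inr rfl) with h | h
      · exact hnoQ h
      · exact hnoR h
  have hyst := hne y p.start_mem_support p'.start_mem_support
  have hzst := hne z p.end_mem_support p'.end_mem_support
  have hanch : ∀ s t, Pocket H A T x D s t → y ≠ s → y ≠ t → z ≠ s → Anchored H D s := by
    intro s t hD hys hyt hzs
    constructor
    · by_cases hsT : s ∈ T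
      · have : ∃ u v, u ≠ v ∧ u ∈ T ∧ v ∈ T ∧ H.Adj s u ∧ H.Adj s v := by
          rcases hsT with h | h
          · obtain ⟨u, v, h1, h2, h3, h4⟩ := path_two_nbrs p hp h hys.symm hzs.symm
            exact ⟨u, v, h1, Or.inl h2, Or.inl h3, h4⟩
          · obtain ⟨u, v, h1, h2, h3, h4⟩ := path_two_nbrs p' hp' h hys.symm hzs.symm
            exact ⟨u, v, h1, Or.inr h2, Or.inr h3, h4⟩
        obtain ⟨u, v, h1, h2, h3, h4⟩ := this
        exact ⟨u, v, h1, fun h => hD.disj u h h2, fun h => hD.disj v h h3, h4⟩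
      · by_contra hcon
        push Not at hcon
        have hyD : y ∉ D := fun h => hD.disj y h hyT
        obtain ⟨d, w, hd, hw, hwt, hdw, _⟩ := (hH t s y hD.sA hy hD.hst hyt).exit
          (D := insert s D) (Set.mem_insert _ _) (by
            rintro (h | h)
            · exact hys h
            · exact hyD h)
        have hwD : w ∉ D := fun h => hw (Or.inr h)
        have hws : w ≠ s := fun h => hw (Or.inl h)
        have hwt : w ≠ t := hwt
        have hds : d = s := by
          rcases hd with h | h
          · exact h
          · rcases hD.bdry d h w hdw with h | h | h
            · exact absurd h hwD
            · exact absurd h hws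
            · exact absurd h hwt
        subst hds
        have hP : Pocket H A T x (insert d D) w t := by
          refine ⟨Or.inr hD.xD, ?_, ?_, hE _ _ hdw, hD.tA, hw, ?_, hwt, ?_⟩
          · rintro v (rfl | hv)
            · exact hD.sA
            · exact hD.sub hv
          · rintro v (rfl | hv)
            · exact hsT
            · exact hD.disj v hv
          · rintro (h | h)
            · exact hD.hst h.symm
            · exact hD.tD h
          · rintro v (rfl | hv) u hu
            · by_cases huD : u ∈ D
              · exact Or.inl (Or.inr huD)
              · right; left
                by_contra hne
                exact hcon u w hne huD hwD hu hdw
            · rcases hD.bdry v hv u hu with h | h | h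
              · exact Or.inl (Or.inr h)
              · exact Or.inl (Or.inl h)
              · exact Or.inr (Or.inr h)
        have := hmax _ ⟨w, t, hP⟩
        rw [Set.ncard_insert_of_notMem hD.sD] at this
        omega
    · have hxt : x ≠ t := fun h => hD.tD (h ▸ hD.xD)
      obtain ⟨d, w, hd, hw, hwt, hdw, _⟩ := (hH t x s hx hD.sA hxt hD.hst).exit hD.xD hD.sD
      rcases hD.bdry d hd w hdw with h | h | h
      · exact absurd h hw
      · exact ⟨d, hd, h ▸ hdw.symm⟩
      · exact absurd h hwt
  refine ⟨D, s, t, ⟨hD.xD, hD.sub, ?_, hD.sA, hD.tA, hD.sD, hD.tD, hD.hst, hD.bdry⟩, hyst.1,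
    hyst.2, hzst.1, hzst.2, hanch s t hD hyst.1 hyst.2 hzst.1,
    hanch t s hD.symm hyst.2 hyst.1 hzst.2⟩
  rintro v hv (rfl | rfl)
  · exact hD.disj _ hv hyT
  · exact hD.disj _ hv hzT

end Pockets

/-! ### The rainbow side of a 3-separation -/

section RainbowSide

variable {V : Type}

theorem TwoPath.nbrs {G : SimpleGraph V} {B : Set V} {m a b : V} (h : TwoPath G B m a b)
    (hma : m ≠ a) (hmb : m ≠ b) : ∃ u v, u ≠ v ∧ u ∈ B ∧ v ∈ B ∧ G.Adj m u ∧ G.Adj m v := by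
  obtain ⟨Wa, Wb, h1, h2, h3, h4, _, _, h7⟩ := h
  obtain ⟨u, hu, hmu⟩ := h3.exists_adj hma
  obtain ⟨v, hv, hmv⟩ := h4.exists_adj hmb
  refine ⟨u, v, ?_, h1 hu, h2 hv, hmu, hmv⟩
  rintro rfl
  exact hmu.ne (h7 u hu hv).symm

section

variable {G : SimpleGraph V} {A B : Set V} {x y z : V}

/-- If `x` has a single neighbour in `A`, the two-path through `z` in `B` extended by the edge
at `x` yields a coloring of `A` that gives `x` and `z` the same color. -/
theorem Sep3.col_pendant [Fintype V] (hG : IsHajos G) (h : Sep3 G A B x y z)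
    (hz : TwoPath G B z x y) {c : V} (hcA : c ∈ A) (hcB : c ∉ B) (hxc : G.Adj x c)
    (hc : ∀ w ∈ A, G.Adj x w → w = c) : PCol G A y z x := by
  classical
  obtain ⟨Wx, Wy, h1, h2, h3, h4, h5, h6, h7⟩ := hz
  have hcx : c ≠ x := fun e => hcB (e ▸ h.xB)
  have hcz : z ≠ c := fun e => hcB (e ▸ h.zB)
  obtain ⟨f, hf, hzy, hzc⟩ := col_two (A := A \ {x}) (m := z) (y := y) (z := c) hG
    (fun e => by
      have : x ∈ A \ {x} := e ▸ Set.mem_univ x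
      exact this.2 rfl)
    ⟨h.zA, h.hxz.symm⟩ ⟨h.yA, h.hxy.symm⟩ ⟨hcA, hcx⟩ h.hyz.symm hcz h4
    ((h3.mono (Set.subset_insert c _)).tail hxc (Set.mem_insert _ _))
    (by
      intro v hv hvA
      rcases h.inter v hvA.1 (h2 hv) with rfl | rfl | rfl
      · exact absurd rfl hvA.2
      · exact Or.inr rfl
      · exact Or.inl rfl)
    (by
      rintro v (rfl | hv) hvA
      · exact Or.inr rfl
      rcases h.inter v hvA.1 (h1 hv) with rfl | rfl | rfl
      · exact absurd rfl hvA.2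
      · exact absurd hv h5
      · exact Or.inl rfl)
    (by
      rintro v hv (rfl | hv')
      · exact absurd (h2 hv) hcB
      · exact h7 v hv' hv ▸ ⟨h.zA, h.hxz.symm⟩)
  have hne : ∀ v, v ≠ x → Function.update f x (f z) v = f v := fun v hv => by simp [hv]
  refine ⟨Function.update f x (f z), ?_, ?_, ?_⟩
  · intro a ha b hb hab
    by_cases hax : a = x
    · subst hax
      have hbc := hc b hb hab
      subst hbc
      rw [Function.update_self, hne _ hcx]
      exact hzc
    · by_cases hbx : b = x
      · subst hbx
        have hbc := hc a ha hab.symm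
        subst hbc
        rw [Function.update_self, hne _ hcx]
        exact hzc.symm
      · rw [hne _ hax, hne _ hbx]
        exact hf a ⟨ha, hax⟩ b ⟨hb, hbx⟩ hab
  · rw [Function.update_self, hne _ h.hxz.symm]
  · rw [hne _ h.hxy.symm, hne _ h.hxz.symm]
    exact hzy.symm

/-- Otherwise `x` has a single neighbour in `A`, so `A` has colorings identifying `x` with `z`, and
`x` with `y`; but `B` has a coloring separating `y` from `z` that is not rainbow, hence of one of
these patterns. -/
theorem Sep3.twoPath_left [Fintype V] (hG : IsHajos G) (hC : Conn3 G) (h : Sep3 G A B x y z)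
    (hR : RCol G A x y z) (hB : Good G B x y z) : TwoPath G A x y z := by
  by_contra hT
  obtain ⟨c, hcA, hcB, hxc, hc⟩ := h.deg hC hT
  have p1 := h.col_pendant hG hB.2.2 hcA hcB hxc hc
  have p2 := h.swap.col_pendant hG hB.2.1.swap hcA hcB hxc hc
  rcases h.symm'.rot.col_pair hG hC (fun hRB => h.not_R hG hR hRB.rot.rot) with q | q
  · exact h.rot.not_P hG p1 q
  · exact h.rot.rot.not_P hG p2.swap q

theorem Sep3.good_left [Fintype V] (hG : IsHajos G) (hC : Conn3 G) (h : Sep3 G A B x y z)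
    (hR : RCol G A x y z) (hB : Good G B x y z) : Good G A x y z :=
  ⟨h.twoPath_left hG hC hR hB, h.rot.twoPath_left hG hC hR.rot hB.rot,
    h.rot.rot.twoPath_left hG hC hR.rot.rot hB.rot.rot⟩

/-- A subdivided triangle in `A` would force a rainbow coloring of `B`. -/
theorem Sep3.no_tri [Fintype V] (hG : IsHajos G) (h : Sep3 G A B x y z)
    (hR : RCol G A x y z) : ¬ Tri (restr G A) x y z := by
  rintro ⟨P, Q, R, hP, hQ, hRR, h1, h2, h3, h4, h5, h6⟩
  have hE : ∀ a b, (restr G A).Adj a b → b ∈ A := fun a b h => h.2.2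
  have hP' := (hP.inter h.xA hE).mono' (restr_le _ _)
  have hQ' := (hQ.inter h.yA hE).mono' (restr_le _ _)
  have hR' := (hRR.inter h.xA hE).mono' (restr_le _ _)
  have hin := h.inter
  have hxB := h.xB
  have hyB := h.yB
  have hzB := h.zB
  obtain ⟨c, hc, hh⟩ := col_three (A := B) hG h.symm'.ne_univ h.xB h.yB h.zB h.hxy h.hyz h.hxz
    hP' hQ' hR' (by
      rintro v ⟨hv, hvA⟩ hvB
      grind) (by
      rintro v ⟨hv, hvA⟩ hvB
      grind) (by
      rintro v ⟨hv, hvA⟩ hvB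
      grind) (by
      rintro v ⟨hv, hvA⟩ hvB
      grind) (by
      rintro v ⟨hv, hvA⟩ hvB
      grind) (by
      rintro v ⟨hv, hvA⟩ hvB
      grind)
  exact h.not_R hG hR ⟨c, hc, hh⟩

/-- After deleting one vertex from `A`, no component of the rest misses both `y` and `z`. -/
theorem Sep3.reach_two [Fintype V] (hC : Conn3 G) (h : Sep3 G A B x y z)
    (hT : TwoPath G A x y z) {c u : V} (hu : u ∈ A) (huc : u ≠ c) :
    Linked (restr G A) {c}ᶜ u y ∨ Linked (restr G A) {c}ᶜ u z := by
  by_contra hcon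
  push Not at hcon
  have hE : ∀ a b, (restr G A).Adj a b → b ∈ A := fun a b h => h.2.2
  obtain ⟨w, hw, hwx⟩ : ∃ w, Linked (restr G A) {c}ᶜ u w ∧ w ≠ x := by
    by_cases hux : u = x
    · subst hux
      obtain ⟨v, v', hvv, hv, hv', hxv, hxv'⟩ := hT.nbrs h.hxy h.hxz
      by_cases hvc : v = c
      · exact ⟨v', Linked.adj huc (fun e => hvv (hvc.trans e.symm)) ⟨hxv', hu, hv'⟩, hxv'.ne'⟩
      · exact ⟨v, Linked.adj huc hvc ⟨hxv, hu, hv⟩, hxv.ne'⟩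
    · exact ⟨u, Linked.refl huc, hux⟩
  have hWA : ∀ a, Linked (restr G A) {c}ᶜ u a → a ∈ A := fun a ha => (ha.inter hu hE).right.2
  have hWB : ∀ a, Linked (restr G A) {c}ᶜ u a → a ≠ x → a ∉ B := by
    intro a ha hax haB
    rcases h.inter a (hWA a ha) haB with rfl | rfl | rfl
    · exact hax rfl
    · exact hcon.1 ha
    · exact hcon.2 ha
  have key : ∀ a b, Linked (restr G A) {c}ᶜ u a → a ≠ x → G.Adj a b →
      Linked (restr G A) {c}ᶜ u b ∨ b = c := by
    intro a b ha hax hab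
    by_cases hbc : b = c
    · exact Or.inr hbc
    · left
      rcases h.edge a b hab with h' | h'
      · exact ha.tail ⟨hab, h'⟩ hbc
      · exact absurd h'.1 (hWB a ha hax)
  have hS : Separ G {a | Linked (restr G A) {c}ᶜ u a ∨ a = c ∨ a = x}
      {a | Linked (restr G A) {c}ᶜ u a → a = x} := by
    refine ⟨?_, ?_, ⟨w, Or.inl hw, fun e => hwx (e hw)⟩, ?_⟩
    · intro v
      by_cases hv : Linked (restr G A) {c}ᶜ u v
      · exact Or.inl (Or.inl hv)
      · exact Or.inr fun h => absurd h hv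
    · intro a b hab
      by_cases ha : Linked (restr G A) {c}ᶜ u a ∧ a ≠ x
      · exact Or.inl ⟨Or.inl ha.1, (key a b ha.1 ha.2 hab).imp id Or.inl⟩
      by_cases hb : Linked (restr G A) {c}ᶜ u b ∧ b ≠ x
      · exact Or.inl ⟨(key b a hb.1 hb.2 hab.symm).imp id Or.inl, Or.inl hb.1⟩
      · exact Or.inr ⟨fun e => by_contra fun e' => ha ⟨e, e'⟩,
          fun e => by_contra fun e' => hb ⟨e, e'⟩⟩
    · by_cases hyc : y = c
      · refine ⟨z, fun e => absurd e hcon.2, ?_⟩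
        rintro (e | e | e)
        · exact hcon.2 e
        · exact h.hyz (hyc.trans e.symm)
        · exact h.hxz e.symm
      · refine ⟨y, fun e => absurd e hcon.1, ?_⟩
        rintro (e | e | e)
        · exact hcon.1 e
        · exact hyc e
        · exact h.hxy e.symm
  have h3 := hC _ _ hS
  have h2 : ({a | Linked (restr G A) {c}ᶜ u a ∨ a = c ∨ a = x} ∩
      {a | Linked (restr G A) {c}ᶜ u a → a = x}).ncard ≤ ({c, x} : Set V).ncard := by
    refine Set.ncard_le_ncard ?_
    rintro a ⟨ha | ha | ha, ha'⟩
    · exact Or.inr (ha' ha)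
    · exact Or.inl ha
    · exact Or.inr ha
  have := Set.ncard_insert_le c {x}
  rw [Set.ncard_singleton] at this
  omega

/-- By `Sep3.reach_two`, after deleting a vertex every component of the rest meets each of the
pairs `{x, y}`, `{y, z}`, `{x, z}`, hence contains two of `x, y, z`; so any two components meet. -/
theorem Sep3.twoConn [Fintype V] (hC : Conn3 G) (h : Sep3 G A B x y z)
    (hA : Good G A x y z) : TwoConn (restr G A) A := by
  intro c u v hu hv huc hvc
  have main : ∀ u, u ∈ A → u ≠ c → _ := fun u hu huc =>
    And.intro (h.reach_two hC hA.1 (c := c) hu huc)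
      (And.intro (h.rot.reach_two hC hA.2.1 (c := c) hu huc)
        (h.rot.rot.reach_two hC hA.2.2 (c := c) hu huc))
  obtain ⟨a1, a2, a3⟩ := main u hu huc
  obtain ⟨b1, b2, b3⟩ := main v hv hvc
  have : ∃ q, Linked (restr G A) {c}ᶜ u q ∧ Linked (restr G A) {c}ᶜ v q := by
    by_contra hq
    push Not at hq
    have hx := hq x
    have hy := hq y
    have hz := hq z
    clear hq main
    rcases a1 with a | a <;> rcases a2 with a' | a' <;> grind
  obtain ⟨q, h1, h2⟩ := this
  exact h1.trans h2.symm

end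

end RainbowSide

/-! ### Collapsing a pocket -/

section Collapse

variable {V : Type}

theorem Tri.swap {H : SimpleGraph V} {x y z : V} (h : Tri H x y z) : Tri H y x z := by
  obtain ⟨P, Q, R, hP, hQ, hR, h1, h2, h3, h4, h5, h6⟩ := h
  exact ⟨P, R, Q, hP.symm, hR, hQ, h1, h3, h2, h5, h4, fun v hR hQ => h6 v hQ hR⟩

/-- The graph in which the pocket `D` around `x` is collapsed to `x`: the vertices of `D` other
than `x` become isolated and `x` is joined exactly to the boundary vertices `s` and `t`. -/
def collapse (H : SimpleGraph V) (D : Set V) (x s t : V) : SimpleGraph V where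
  Adj a b := a ≠ b ∧ ((H.Adj a b ∧ a ∉ D ∧ b ∉ D) ∨ (a = x ∧ (b = s ∨ b = t)) ∨
    (b = x ∧ (a = s ∨ a = t)))
  symm := ⟨fun a b h => ⟨h.1.symm, by
    rcases h.2 with h | h | h
    · exact Or.inl ⟨h.1.symm, h.2.2, h.2.1⟩
    · exact Or.inr (Or.inr h)
    · exact Or.inr (Or.inl h)⟩⟩
  loopless := ⟨fun _ h => h.1 rfl⟩

section

variable {H : SimpleGraph V} {A T D : Set V} {x y z s t : V}

theorem Pocket.adj_x (h : Pocket H A T x D s t) {w : V} (hw : w = s ∨ w = t) :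
    (collapse H D x s t).Adj x w := by
  refine ⟨?_, Or.inr (Or.inl ⟨rfl, hw⟩)⟩
  rintro rfl
  rcases hw with rfl | rfl
  · exact h.sD h.xD
  · exact h.tD h.xD

/-- Outside a pocket of a 2-connected graph everything is linked to `s`. -/
theorem Pocket.outside (hE : ∀ a b, H.Adj a b → b ∈ A) (hH : TwoConn H A)
    (h : Pocket H A T x D s t) (hs : Anchored H D s) {u : V} (hu : u ∈ A) (huD : u ∉ D) :
    Linked H Dᶜ u s := by
  have main : ∀ s t, Pocket H A T x D s t → ∀ u ∈ A, u ∉ D → u ≠ t → Linked H Dᶜ u s := by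
    intro s t h u hu huD hut
    have hxt : x ≠ t := fun e => h.tD (e ▸ h.xD)
    obtain ⟨d, w, hd, hw, _, hdw, hl⟩ := (hH t u x (hu) (h.sub h.xD) hut hxt).exit (D := Dᶜ) huD
      (by simpa using h.xD)
    have hwD : w ∈ D := by simpa using hw
    rcases h.bdry w hwD d hdw.symm with e | e | e
    · exact absurd e hd
    · exact e ▸ hl.mono Set.inter_subset_right
    · exact absurd e hl.right.1
  by_cases hut : u = t
  · obtain ⟨n, hnD, hnt, hsn⟩ : ∃ n, n ∉ D ∧ n ≠ t ∧ H.Adj s n := by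
      obtain ⟨⟨u, v, huv, h1, h2, h3, h4⟩, _⟩ := hs
      by_cases hu : u = t
      · exact ⟨v, h2, fun e => huv (hu.trans e.symm), h4⟩
      · exact ⟨u, h1, hu, h3⟩
    have hns := main s t h n (hE _ _ hsn) hnD hnt
    have hnt' := main t s h.symm n (hE _ _ hsn) hnD hsn.ne'
    exact hut ▸ hnt'.symm.trans hns
  · exact main s t h u hu huD hut

theorem Pocket.collapse_twoConn (hE : ∀ a b, H.Adj a b → b ∈ A) (hH : TwoConn H A)
    (h : Pocket H A T x D s t) (hs : Anchored H D s) :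
    TwoConn (collapse H D x s t) (insert x (A \ D)) := by
  classical
  have hout : ∀ u ∈ A \ D, Linked (collapse H D x s t) Dᶜ u s := by
    intro u hu
    refine (h.outside hE hH hs hu.1 hu.2).map hu.2 ?_
    intro a b ha hb hab _
    exact Linked.adj ha hb ⟨hab.ne, Or.inl ⟨hab, ha, hb⟩⟩
  intro c u v hu hv huc hvc
  by_cases hcD : c ∈ D
  · have main : ∀ u ∈ insert x (A \ D), u ≠ c → Linked (collapse H D x s t) {c}ᶜ u s := by
      rintro u (rfl | hu) huc
      · exact Linked.adj huc (fun e => h.sD (e ▸ hcD)) (h.adj_x (Or.inl rfl))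
      · exact (hout u hu).mono fun v hv e => hv (e ▸ hcD)
    exact (main u hu huc).trans (main v hv hvc).symm
  · have hA1 : ∀ w ∈ insert x (A \ D), w ∈ A := by
      rintro w (rfl | hw)
      · exact h.sub h.xD
      · exact hw.1
    have hfix : ∀ w ∈ insert x (A \ D), (if w ∈ D then x else w) = w := by
      rintro w (rfl | hw)
      · simp [h.xD]
      · simp [hw.2]
    have hxc : x ≠ c := fun e => hcD (e ▸ h.xD)
    have := (hH c u v (hA1 u hu) (hA1 v hv) huc hvc).ind
      (P := fun w => Linked (collapse H D x s t) {c}ᶜ u (if w ∈ D then x else w))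
      (by rw [hfix u hu]; exact Linked.refl huc) (by
        intro a b _ hP hab hb
        by_cases ha : a ∈ D <;> by_cases hb' : b ∈ D
        · simpa [ha, hb'] using hP
        · rw [if_pos ha] at hP
          rw [if_neg hb']
          exact hP.tail (h.adj_x ((h.bdry a ha b hab).resolve_left hb')) hb
        · rw [if_neg ha] at hP
          rw [if_pos hb']
          exact hP.tail (h.adj_x ((h.bdry b hb' a hab.symm).resolve_left ha)).symm hxc
        · rw [if_neg ha] at hP
          rw [if_neg hb']
          exact hP.tail ⟨hab.ne, Or.inl ⟨hab, ha, hb'⟩⟩ hb)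
    rwa [hfix v hv] at this

/-- Inside a pocket, `x` has links to `s` and to `t` meeting only in `x`. -/
theorem Pocket.fan [Finite V] (hH : TwoConn H A) (h : Pocket H A T x D s t) :
    ∃ Qs Qt, Linked H Qs x s ∧ Linked H Qt x t ∧ (∀ v ∈ Qs, v ∈ D ∨ v = s) ∧
      (∀ v ∈ Qt, v ∈ D ∨ v = t) ∧ ∀ v ∈ Qs, v ∈ Qt → v = x := by
  obtain ⟨e, f, Q, R, he, hf, hef, hQ, hR, hQT, hRT, hQR⟩ := fan_two (T := {s, t}) hH
    (h.sub h.xD) h.sA h.tA (by simp) (by simp) h.hst (by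
      rintro (e | e)
      · exact h.sD (e ▸ h.xD)
      · exact h.tD (e ▸ h.xD))
  have main : ∀ e Q, e ∈ ({s, t} : Set V) → Linked H Q x e →
      (∀ v ∈ Q, v ∈ ({s, t} : Set V) → v = e) →
      ∃ Q' ⊆ Q, Linked H Q' x e ∧ ∀ v ∈ Q', v ∈ D ∨ v = e := by
    intro e Q he hQ hQT
    obtain ⟨d, w, hd, hw, hwQ, hdw, hl⟩ := hQ.exit (D := D) h.xD (by
      rcases he with rfl | rfl
      · exact h.sD
      · exact h.tD)
    have hwe : w = e := hQT w hwQ ((h.bdry d hd w hdw).resolve_left hw)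
    subst hwe
    refine ⟨insert w (Q ∩ D), ?_, (hl.mono (Set.subset_insert _ _)).tail hdw
      (Set.mem_insert _ _), ?_⟩
    · rintro v (rfl | hv)
      · exact hwQ
      · exact hv.1
    · rintro v (rfl | hv)
      · exact Or.inr rfl
      · exact Or.inl hv.2
  obtain ⟨Q', hQ1, hQ2, hQ3⟩ := main e Q he hQ hQT
  obtain ⟨R', hR1, hR2, hR3⟩ := main f R hf hR hRT
  have hd : ∀ v ∈ Q', v ∈ R' → v = x := fun v hv hv' => hQR v (hQ1 hv) (hR1 hv')
  rcases he with rfl | he <;> rcases hf with rfl | hf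
  · exact absurd rfl hef
  · obtain rfl : f = t := hf
    exact ⟨Q', R', hQ2, hR2, hQ3, hR3, hd⟩
  · obtain rfl : e = t := he
    exact ⟨R', Q', hR2, hQ2, hR3, hQ3, fun v hv hv' => hd v hv' hv⟩
  · exact absurd (Eq.trans he (Eq.symm hf)) hef

/-- A subdivided triangle of the collapsed graph expands to one of the original graph. -/
theorem Pocket.tri_expand [Finite V] (hH : TwoConn H A) (h : Pocket H A {y, z} x D s t)
    (hys : y ≠ s) (hyt : y ≠ t) (hzs : z ≠ s) (hzt : z ≠ t)
    (hT : Tri (collapse H D x s t) x y z) : Tri H x y z := by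
  obtain ⟨Qs, Qt, hs, ht, hsD, htD, hst⟩ := h.fan hH
  obtain ⟨P, Q, R, hP, hQ, hR, h1, h2, h3, h4, h5, h6⟩ := hT
  have hyD : y ∉ D := fun e => h.disj y e (by simp)
  have hzD : z ∉ D := fun e => h.disj z e (by simp)
  have hxD := h.xD
  have hsD' := h.sD
  have htD' := h.tD
  let E : Set V → Set V := fun P =>
    {v | v = x ∨ (v ∈ P ∧ v ∉ D) ∨ (s ∈ P ∧ v ∈ Qs) ∨ (t ∈ P ∧ v ∈ Qt)}
  have hE : ∀ P v, v ∈ E P ↔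
    (v = x ∨ (v ∈ P ∧ v ∉ D) ∨ (s ∈ P ∧ v ∈ Qs) ∨ (t ∈ P ∧ v ∈ Qt)) := fun P v => Iff.rfl
  have hlift : ∀ P w, Linked (collapse H D x s t) P x w → Linked H (E P) x w := by
    intro P w hP
    refine hP.map (Or.inl rfl) ?_
    have hxw : ∀ w ∈ P, w = s ∨ w = t → Linked H (E P) x w := by
      rintro w hw (rfl | rfl)
      · exact hs.mono fun v hv => Or.inr (Or.inr (Or.inl ⟨hw, hv⟩))
      · exact ht.mono fun v hv => Or.inr (Or.inr (Or.inr ⟨hw, hv⟩))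
    rintro a b ha hb ⟨_, hab | ⟨rfl, hab⟩ | ⟨rfl, hab⟩⟩ _
    · exact Linked.adj (Or.inr (Or.inl ⟨ha, hab.2.1⟩)) (Or.inr (Or.inl ⟨hb, hab.2.2⟩)) hab.1
    · exact hxw b hb hab
    · exact (hxw a ha hab).symm
  have hQ' : Linked H (Q ∩ Dᶜ) y z := by
    refine hQ.map ⟨hQ.left, hyD⟩ ?_
    rintro a b ha hb ⟨_, hab | ⟨rfl, hab⟩ | ⟨rfl, hab⟩⟩ _
    · exact Linked.adj ⟨ha, hab.2.1⟩ ⟨hb, hab.2.2⟩ hab.1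
    · exact absurd ha h2
    · exact absurd hb h2
  refine ⟨E P, Q ∩ Dᶜ, E R, hlift P y hP, hQ', hlift R z hR, ?_, fun e => h2 e.1, ?_, ?_, ?_, ?_⟩
  · rw [hE]
    rintro (e | e | e | e)
    · exact hzD (e ▸ hxD)
    · exact h1 e.1
    · exact (hsD z e.2).elim hzD hzs
    · exact (htD z e.2).elim hzD hzt
  · rw [hE]
    rintro (e | e | e | e)
    · exact hyD (e ▸ hxD)
    · exact h3 e.1
    · exact (hsD y e.2).elim hyD hys
    · exact (htD y e.2).elim hyD hyt
  · rintro v hv ⟨hvQ, hvD⟩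
    rcases hv with e | e | e | e
    · exact absurd (e ▸ hvQ) h2
    · exact h4 v e.1 hvQ
    · exact h4 v (((hsD v e.2).resolve_left hvD) ▸ e.1) hvQ
    · exact h4 v (((htD v e.2).resolve_left hvD) ▸ e.1) hvQ
  · intro v hv hv'
    rw [hE] at hv hv'
    grind
  · rintro v ⟨hvQ, hvD⟩ hv
    rcases hv with e | e | e | e
    · exact absurd (e ▸ hvQ) h2
    · exact h6 v hvQ e.1
    · exact h6 v hvQ (((hsD v e.2).resolve_left hvD) ▸ e.1)
    · exact h6 v hvQ (((htD v e.2).resolve_left hvD) ▸ e.1)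

/-- Two disjoint pockets, around `x` and around `y`, none of which meets the boundary of the
other. -/
theorem exists_two_pockets [Finite V] (hE : ∀ a b, H.Adj a b → b ∈ A) (hH : TwoConn H A)
    (hx : x ∈ A) (hy : y ∈ A) (hz : z ∈ A) (hxy : x ≠ y) (hyz : y ≠ z) (hxz : x ≠ z)
    (hT : ¬ Tri H x y z) :
    ∃ D s t D' s' t', Pocket H A {y, z} x D s t ∧ Pocket H A {x, z} y D' s' t' ∧
      (∀ v ∈ D, v ∉ D') ∧ s ∉ D' ∧ t ∉ D' ∧ s' ∉ D ∧ t' ∉ D ∧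
      y ≠ s ∧ y ≠ t ∧ z ≠ s ∧ z ≠ t ∧ x ≠ s' ∧ x ≠ t' ∧ z ≠ s' ∧ z ≠ t' ∧
      Anchored H D s ∧ Anchored H D t ∧ Anchored H D' s' ∧ Anchored H D' t' := by
  obtain ⟨D, s, t, h, hys, hyt, hzs, hzt, has, hat⟩ := exists_pocket hE hH hx hy hz hxy hyz hxz hT
  have hyD : y ∉ D := fun e => h.disj y e (by simp)
  have hzD : z ∉ D := fun e => h.disj z e (by simp)
  obtain ⟨D', s', t', h', hxs', hxt', hzs', hzt', has', hat'⟩ :=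
    exists_pocket (H := collapse H D x s t) (A := insert x (A \ D)) (x := y) (y := x) (z := z)
    (by
      rintro a b ⟨_, hab | ⟨rfl, hab⟩ | ⟨rfl, hab⟩⟩
      · exact Or.inr ⟨hE _ _ hab.1, hab.2.2⟩
      · rcases hab with rfl | rfl
        · exact Or.inr ⟨h.sA, h.sD⟩
        · exact Or.inr ⟨h.tA, h.tD⟩
      · exact Or.inl rfl) (h.collapse_twoConn hE hH has) (Or.inr ⟨hy, hyD⟩) (Or.inl rfl)
    (Or.inr ⟨hz, hzD⟩) hxy.symm hxz hyz (fun e => hT (h.tri_expand hH hys hyt hzs hzt e.swap))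
  have hxD' : x ∉ D' := fun e => h'.disj x e (by simp)
  have hDD : ∀ v ∈ D, v ∉ D' := by
    intro v hv hv'
    rcases h'.sub hv' with e | e
    · exact hxD' (e ▸ hv')
    · exact e.2 hv
  have hst : ∀ w, w = s ∨ w = t → w ∉ D' := by
    intro w hw hwD
    rcases h'.bdry w hwD x (h.adj_x hw).symm with e | e | e
    · exact hxD' e
    · exact hxs' e
    · exact hxt' e
  have hA1 : ∀ w ∈ insert x (A \ D), x ≠ w → w ∉ D := by
    rintro w (rfl | hw) hne
    · exact absurd rfl hne
    · exact hw.2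
  have hsub : insert x (A \ D) ⊆ A := by
    rintro w (rfl | hw)
    · exact hx
    · exact hw.1
  have hs'D := hA1 s' h'.sA hxs'
  have ht'D := hA1 t' h'.tA hxt'
  have anch : ∀ w, w ∉ D → Anchored (collapse H D x s t) D' w → Anchored H D' w := by
    intro w hwD hw
    have hwx : w ≠ x := fun e => hwD (e ▸ h.xD)
    have hcase : ∀ v, (collapse H D x s t).Adj w v →
        (v = x ∧ ∃ d ∈ D, H.Adj w d) ∨ (v ∉ D ∧ H.Adj w v) := by
      rintro v ⟨_, e | e | e⟩
      · exact Or.inr ⟨e.2.2, e.1⟩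
      · exact absurd e.1 hwx
      · refine Or.inl ⟨e.1, ?_⟩
        rcases e.2 with rfl | rfl
        · exact has.2
        · exact hat.2
    obtain ⟨⟨u, v, huv, hu, hv, hwu, hwv⟩, d, hd, hwd⟩ := hw
    refine ⟨?_, d, hd, ?_⟩
    · rcases hcase u hwu with ⟨rfl, e, he, hwe⟩ | ⟨huD, hu'⟩ <;>
        rcases hcase v hwv with ⟨rfl, e', he', hwe'⟩ | ⟨hvD, hv'⟩
      · exact absurd rfl huv
      · exact ⟨e, v, fun q => hvD (q ▸ he), hDD e he, hv, hwe, hv'⟩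
      · exact ⟨u, e', fun q => huD (q ▸ he'), hu, hDD e' he', hu', hwe'⟩
      · exact ⟨u, v, huv, hu, hv, hu', hv'⟩
    · rcases hcase d hwd with ⟨rfl, _⟩ | e
      · exact absurd hd hxD'
      · exact e.2
  refine ⟨D, s, t, D', s', t', h, ?_, hDD, hst s (Or.inl rfl), hst t (Or.inr rfl), hs'D, ht'D,
    hys, hyt, hzs, hzt, hxs', hxt', hzs', hzt', has, hat, anch s' hs'D has', anch t' ht'D hat'⟩
  refine ⟨h'.xD, h'.sub.trans hsub, h'.disj, hsub h'.sA, hsub h'.tA, h'.sD, h'.tD, h'.hst, ?_⟩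
  intro d hd w hdw
  by_cases hwD : w ∈ D
  · rcases h.bdry w hwD d hdw.symm with e | e
    · exact absurd hd (hDD d e)
    · exact absurd hd (hst d e)
  · exact h'.bdry d hd w ⟨hdw.ne, Or.inl ⟨hdw, fun e => hDD d e hd, hwD⟩⟩

end

end Collapse

/-! ### Flexibility of pockets and the contradiction -/

section Flexibility

variable {V : Type}

theorem exists_perm_two {a b a' b' : Fin 4} (h : a ≠ b) (h' : a' ≠ b') :
    ∃ σ : Equiv.Perm (Fin 4), σ a = a' ∧ σ b = b' := by
  obtain ⟨σ, hσ⟩ := exists_perm (V := Bool) Set.univ (fun i => if i then a else b)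
    (fun i => if i then a' else b') (by simp [h, h', h.symm, h'.symm])
  exact ⟨σ, by simpa using hσ true trivial, by simpa using hσ false trivial⟩

theorem two_avoid (a b : Fin 4) : ∃ g g' : Fin 4, g ≠ g' ∧ g ≠ a ∧ g ≠ b ∧ g' ≠ a ∧ g' ≠ b := by
  revert a b; decide

/-- However `s` and `t` are colored (consistently with a possible edge between them), at least
two colors of `x` extend to a coloring of the pocket `D` with its boundary. -/
def Flexible (G : SimpleGraph V) (D : Set V) (x s t : V) : Prop :=
  ∀ α β : Fin 4, (G.Adj s t → α ≠ β) → ∃ g g' : Fin 4, g ≠ g' ∧ ∀ γ, γ = g ∨ γ = g' →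
    ∃ c, Col G {v | v ∈ D ∨ v = s ∨ v = t} c ∧ c s = α ∧ c t = β ∧ c x = γ

section

variable {G : SimpleGraph V} {A B D : Set V} {x y z s t : V}

/-- A pocket is flexible: if it is more than a single vertex, it is one side of a smaller
3-separation, to which the inductive hypothesis applies. -/
theorem Sep3.flexible [Fintype V] (hG : IsHajos G) (hC : Conn3 G) (h : Sep3 G A B x y z)
    (hB : TwoPath G B x y z)
    (ih : ∀ A' B' x' y' z', A'.ncard < A.ncard → Sep3 G A' B' x' y' z' → RCol G A' x' y' z' →
      Good G B' x' y' z' → False)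
    (hD : Pocket (restr G A) A {y, z} x D s t) (hys : y ≠ s) (hyt : y ≠ t)
    (hs : Anchored (restr G A) D s) (ht : Anchored (restr G A) D t) : Flexible G D x s t := by
  classical
  have hyD : y ∉ D := fun e => hD.disj y e (by simp)
  have hzD : z ∉ D := fun e => hD.disj z e (by simp)
  have hxD := hD.xD
  have hxs : x ≠ s := fun e => hD.sD (e ▸ hxD)
  have hxt : x ≠ t := fun e => hD.tD (e ▸ hxD)
  have hst := hD.hst
  intro α β hαβ
  by_cases hne : ∀ v ∈ D, v = x
  · obtain ⟨g, g', hgg, h1, h2, h3, h4⟩ := two_avoid α β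
    refine ⟨g, g', hgg, fun γ hγ => ?_⟩
    have hγα : γ ≠ α := by rcases hγ with rfl | rfl <;> assumption
    have hγβ : γ ≠ β := by rcases hγ with rfl | rfl <;> assumption
    let c : V → Fin 4 := fun v => if v = x then γ else if v = s then α else β
    have cx : c x = γ := if_pos rfl
    have cs : c s = α := by simp [c, hxs.symm]
    have ct : c t = β := by simp [c, hxt.symm, hst.symm]
    refine ⟨c, ?_, cs, ct, cx⟩
    have hmem : ∀ v ∈ {v | v ∈ D ∨ v = s ∨ v = t}, v = x ∨ v = s ∨ v = t :=
      fun v hv => hv.imp (hne v) id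
    intro a ha b hb hab
    have hab' := hab.ne
    rcases hmem a ha with rfl | rfl | rfl <;> rcases hmem b hb with rfl | rfl | rfl
    · exact absurd rfl hab'
    · rw [cx, cs]; exact hγα
    · rw [cx, ct]; exact hγβ
    · rw [cx, cs]; exact hγα.symm
    · exact absurd rfl hab'
    · rw [cs, ct]; exact hαβ hab
    · rw [cx, ct]; exact hγβ.symm
    · rw [cs, ct]; exact (hαβ hab.symm).symm
    · exact absurd rfl hab'
  push Not at hne
  obtain ⟨w, hwD, hwx⟩ := hne
  have hDB : ∀ v ∈ D, v ∈ B → v = x := by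
    intro v hv hvB
    rcases h.inter v (hD.sub hv) hvB with rfl | rfl | rfl
    · rfl
    · exact absurd hv hyD
    · exact absurd hv hzD
  have key : ∀ a b, G.Adj a b → a ∈ D → a ≠ x → b ∈ D ∨ b = s ∨ b = t := by
    intro a b hab ha hax
    rcases h.edge a b hab with e | e
    · exact hD.bdry a ha b ⟨hab, e⟩
    · exact absurd (hDB a ha e.1) hax
  have h' : Sep3 G {v | v ∈ D ∨ v = s ∨ v = t} {v | v ∈ D → v = x} x s t := by
    refine ⟨⟨?_, ?_, ⟨w, Or.inl hwD, fun e => hwx (e hwD)⟩, ⟨y, fun e => absurd e hyD, ?_⟩⟩, hxs,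
      hst, hxt, Or.inl hxD, fun _ => rfl, Or.inr (Or.inl rfl), fun e => absurd e hD.sD,
      Or.inr (Or.inr rfl), fun e => absurd e hD.tD, ?_⟩
    · intro v
      by_cases hv : v ∈ D
      · exact Or.inl (Or.inl hv)
      · exact Or.inr fun e => absurd e hv
    · intro a b hab
      by_cases ha : a ∈ D ∧ a ≠ x
      · exact Or.inl ⟨Or.inl ha.1, key a b hab ha.1 ha.2⟩
      by_cases hb : b ∈ D ∧ b ≠ x
      · exact Or.inl ⟨key b a hab.symm hb.1 hb.2, Or.inl hb.1⟩
      · exact Or.inr ⟨fun e => by_contra fun e' => ha ⟨e, e'⟩,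
          fun e => by_contra fun e' => hb ⟨e, e'⟩⟩
    · rintro (e | e | e)
      · exact hyD e
      · exact hys e
      · exact hyt e
    · rintro v (e | e) e'
      · exact Or.inl (e' e)
      · exact Or.inr e
  have hgood : Good G {v | v ∈ D → v = x} x s t := by
    refine ⟨?_, ?_, ?_⟩
    · by_contra hT
      obtain ⟨c, _, _, _, hc⟩ := h'.symm'.deg hC hT
      obtain ⟨u, v, huv, hu, hv, hxu, hxv⟩ := hB.nbrs h.hxy h.hxz
      exact huv ((hc u (fun e => hDB u e hu) hxu).trans (hc v (fun e => hDB v e hv) hxv).symm)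
    · by_contra hT
      obtain ⟨c, _, _, _, hc⟩ := h'.symm'.rot.deg hC hT
      obtain ⟨⟨u, v, huv, hu, hv, hxu, hxv⟩, _⟩ := hs
      exact huv ((hc u (fun e => absurd e hu) hxu.1).trans (hc v (fun e => absurd e hv) hxv.1).symm)
    · by_contra hT
      obtain ⟨c, _, _, _, hc⟩ := h'.symm'.rot.rot.deg hC hT
      obtain ⟨⟨u, v, huv, hu, hv, hxu, hxv⟩, _⟩ := ht
      exact huv ((hc u (fun e => absurd e hu) hxu.1).trans (hc v (fun e => absurd e hv) hxv.1).symm)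
  have hlt : {v | v ∈ D ∨ v = s ∨ v = t}.ncard < A.ncard := by
    refine Set.ncard_lt_ncard ⟨?_, fun e => ?_⟩
    · rintro v (e | rfl | rfl)
      · exact hD.sub e
      · exact hD.sA
      · exact hD.tA
    · rcases e h.yA with e | e | e
      · exact hyD e
      · exact hys e
      · exact hyt e
  have hnR : ¬ RCol G {v | v ∈ D ∨ v = s ∨ v = t} x s t := fun hR => ih _ _ _ _ _ hlt h' hR hgood
  by_cases hab : α = β
  · subst hab
    obtain ⟨g, g', hgg, h1, _, h3, _⟩ := two_avoid α α
    obtain ⟨c, hc, c1, c2⟩ := h'.col_middle hG hgood.1 hnR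
    refine ⟨g, g', hgg, fun γ hγ => ?_⟩
    have hγα : γ ≠ α := by rcases hγ with rfl | rfl <;> assumption
    obtain ⟨σ, s1, s2⟩ := exists_perm_two c2 hγα
    exact ⟨_, hc.perm σ, s2, c1 ▸ s2, s1⟩
  · refine ⟨α, β, hab, ?_⟩
    rintro γ (rfl | rfl)
    · obtain ⟨c, hc, c1, c2⟩ := h'.rot.rot.col_middle hG hgood.2.2 fun e => hnR e.rot
      obtain ⟨σ, s1, s2⟩ := exists_perm_two c2 (Ne.symm hab)
      exact ⟨_, hc.perm σ, c1 ▸ s2, s1, s2⟩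
    · obtain ⟨c, hc, c1, c2⟩ := h'.rot.col_middle hG hgood.2.1 fun e => hnR e.rot.rot
      obtain ⟨σ, s1, s2⟩ := exists_perm_two c2 hab
      exact ⟨_, hc.perm σ, s1, s2, c1 ▸ s2⟩

/-- Recoloring a pocket by a coloring that agrees on its boundary. -/
theorem Pocket.recolor {T : Set V} (hD : Pocket (restr G A) A T x D s t) {c c' : V → Fin 4}
    (hc : Col G A c) (hc' : Col G {v | v ∈ D ∨ v = s ∨ v = t} c') (h1 : c' s = c s)
    (h2 : c' t = c t) : ∃ f, Col G A f ∧ (∀ v ∈ D, f v = c' v) ∧ ∀ v ∉ D, f v = c v := by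
  classical
  let f : V → Fin 4 := fun v => if v ∈ D then c' v else c v
  have f1 : ∀ v ∈ D, f v = c' v := fun v hv => if_pos hv
  have f2 : ∀ v ∉ D, f v = c v := fun v hv => if_neg hv
  have f3 : ∀ v, v = s ∨ v = t → f v = c' v := by
    rintro v (rfl | rfl)
    · rw [f2 _ hD.sD, h1]
    · rw [f2 _ hD.tD, h2]
  have key : ∀ a ∈ A, ∀ b ∈ A, G.Adj a b → a ∈ D → f a ≠ f b := by
    intro a ha b hb hab haD
    have hbD := hD.bdry a haD b ⟨hab, ha, hb⟩
    have : f b = c' b := hbD.elim (f1 b) (f3 b)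
    rw [f1 a haD, this]
    exact hc' a (Or.inl haD) b hbD hab
  refine ⟨f, ?_, f1, f2⟩
  intro a ha b hb hab
  by_cases haD : a ∈ D
  · exact key a ha b hb hab haD
  by_cases hbD : b ∈ D
  · exact (key b hb a ha hab.symm hbD).symm
  · rw [f2 a haD, f2 b hbD]
    exact hc a ha b hb hab

/-- With two colors available for each of `x` and `y`, and `γ` the color of `z`, one can choose so
that exactly two of the three agree. -/
theorem pick_colors {g g' k k' : Fin 4} (γ : Fin 4) (hg : g ≠ g') (hk : k ≠ k') :
    ∃ a b, (a = g ∨ a = g') ∧ (b = k ∨ b = k') ∧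
      ((a = γ ∧ b ≠ γ) ∨ (b = γ ∧ a ≠ γ) ∨ (a = b ∧ a ≠ γ)) := by
  decide +revert

/-- There is no 3-separation with a rainbow coloring on one side and all two-paths on the
other. -/
theorem no_good_sep [Fintype V] (hG : IsHajos G) (hC : Conn3 G) : ∀ (n : ℕ) (A B : Set V)
    (x y z : V), A.ncard = n → Sep3 G A B x y z → RCol G A x y z → Good G B x y z → False := by
  intro n
  induction n using Nat.strong_induction_on with
  | _ n ih =>
  intro A B x y z hn h hR hB
  have ih' : ∀ A' B' x' y' z', A'.ncard < A.ncard → Sep3 G A' B' x' y' z' →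
      RCol G A' x' y' z' → Good G B' x' y' z' → False :=
    fun A' B' x' y' z' hlt => ih _ (hn ▸ hlt) A' B' x' y' z' rfl
  have hA := h.good_left hG hC hR hB
  have hRB : ¬ RCol G B x y z := h.not_R hG hR
  -- so `B` has colorings of all three types in which exactly two of `x, y, z` agree
  have n1 : ¬ PCol G A x y z := fun e => h.not_P hG e (h.symm'.col_middle hG hA.1 hRB)
  have n2 : ¬ PCol G A y z x := fun e => h.rot.not_P hG e
    (h.symm'.rot.col_middle hG hA.2.1 fun e => hRB e.rot.rot)
  have n3 : ¬ PCol G A z x y := fun e => h.rot.rot.not_P hG e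
    (h.symm'.rot.rot.col_middle hG hA.2.2 fun e => hRB e.rot)
  obtain ⟨D, s, t, D', s', t', hD, hD', hDD, hs, ht, hs', ht', hys, hyt, hzs, hzt, hxs, hxt, hzs',
    hzt', as, at', bs, bt⟩ := exists_two_pockets (H := restr G A) (fun a b h => h.2.2)
      (h.twoConn hC hA) h.xA h.yA h.zA h.hxy h.hyz h.hxz (h.no_tri hG hR)
  have fl := h.flexible hG hC hB.1 ih' hD hys hyt as at'
  have fl' := h.rot.flexible hG hC hB.2.1 ih' (Set.pair_comm x z ▸ hD') hzs' hzt' bs bt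
  obtain ⟨c, hc, -⟩ := hR
  obtain ⟨g, g', hg, hX⟩ := fl (c s) (c t) (fun e => hc s hD.sA t hD.tA e)
  obtain ⟨k, k', hk, hY⟩ := fl' (c s') (c t') (fun e => hc s' hD'.sA t' hD'.tA e)
  obtain ⟨a, b, ha, hb, hab⟩ := pick_colors (c z) hg hk
  obtain ⟨c1, hc1, e1, e2, e3⟩ := hX a ha
  obtain ⟨c2, hc2, e1', e2', e3'⟩ := hY b hb
  obtain ⟨f, hf, f1, f2⟩ := hD.recolor hc hc1 e1 e2
  obtain ⟨k, hk, k1, k2⟩ := hD'.recolor hf hc2 (e1'.trans (f2 s' hs').symm)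
    (e2'.trans (f2 t' ht').symm)
  have kx : k x = a := by rw [k2 x (hDD x hD.xD), f1 x hD.xD, e3]
  have ky : k y = b := by rw [k1 y hD'.xD, e3']
  have kz : k z = c z := by
    rw [k2 z fun e => hD'.disj z e (by simp), f2 z fun e => hD.disj z e (by simp)]
  rw [← kx, ← ky, ← kz] at hab
  rcases hab with ⟨p, q⟩ | ⟨p, q⟩ | ⟨p, q⟩
  · exact n2 ⟨k, hk, p.symm, fun e => q e⟩
  · exact n1 ⟨k, hk, p, fun e => q (e.trans p)⟩
  · exact n3 ⟨k, hk, p, fun e => q e.symm⟩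

end

end Flexibility

/-- Lemma 2.1: Every Hajós graph is 4-connected. -/
theorem statement1 {V : Type} [Fintype V] (G : SimpleGraph V) (hG : IsHajos G) :
    IsKConnected G 4 := by
  have hC := hajos_conn3 hG
  have hcard : 4 < Fintype.card V := by
    by_contra hle
    exact hG.2.1 ((G.colorable_of_fintype).mono (by omega))
  refine ⟨hcard, fun X hX => ?_⟩
  have hsep : ∀ A B, Separ G A B → A ∩ B ⊆ X → False := by
    intro A B hS hAB
    have h3 : (A ∩ B).ncard = 3 := by
      have := hC A B hS
      have := Set.ncard_le_ncard hAB
      omega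
    obtain ⟨x, y, z, hxy, hxz, hyz, hset⟩ := Set.ncard_eq_three.1 h3
    have hx : x ∈ A ∩ B := by simp [hset]
    have hy : y ∈ A ∩ B := by simp [hset]
    have hz : z ∈ A ∩ B := by simp [hset]
    have h : Sep3 G A B x y z := ⟨hS, hxy, hyz, hxz, hx.1, hx.2, hy.1, hy.2, hz.1, hz.2, by
      intro v hv hv'
      have : v ∈ A ∩ B := ⟨hv, hv'⟩
      rw [hset] at this
      simpa using this⟩
    have main : ∀ A B, Sep3 G A B x y z → RCol G A x y z → False := by
      intro A B h hR
      obtain ⟨A', B', x', y', z', h', hR', hB'⟩ := exists_good hG hC _ A B x y z rfl h hR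
      exact no_good_sep hG hC _ A' B' x' y' z' rfl h' hR' hB'
    rcases h.exists_R hG hC with hR | hR
    · exact main A B h hR
    · exact main B A h.symm' hR
  have hlink : ∀ u v, u ∉ X → v ∉ X → Linked G Xᶜ u v := by
    intro u v hu hv
    by_contra huv
    refine hsep {w | w ∈ X ∨ Linked G Xᶜ u w} {w | ¬ Linked G Xᶜ u w} ⟨?_, ?_,
      ⟨u, Or.inr (Linked.refl hu), fun e => e (Linked.refl hu)⟩, ⟨v, huv, ?_⟩⟩ ?_
    · intro w
      by_cases hw : Linked G Xᶜ u w
      · exact Or.inl (Or.inr hw)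
      · exact Or.inr hw
    · have key : ∀ a b, G.Adj a b → Linked G Xᶜ u a → b ∈ X ∨ Linked G Xᶜ u b := by
        intro a b hab ha
        by_cases hb : b ∈ X
        · exact Or.inl hb
        · exact Or.inr (ha.tail hab hb)
      intro a b hab
      by_cases ha : Linked G Xᶜ u a
      · exact Or.inl ⟨Or.inr ha, key a b hab ha⟩
      by_cases hb : Linked G Xᶜ u b
      · exact Or.inl ⟨key b a hab.symm hb, Or.inr hb⟩
      · exact Or.inr ⟨ha, hb⟩
    · rintro (e | e)
      · exact hv e
      · exact huv e
    · rintro w ⟨e | e, e'⟩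
      · exact e
      · exact absurd e e'
  have hne : ∃ u, u ∉ X := by
    by_contra hcon
    push Not at hcon
    have hu : X = Set.univ := Set.eq_univ_of_forall hcon
    rw [hu, Set.ncard_univ, Nat.card_eq_fintype_card] at hX
    omega
  obtain ⟨u₀, hu₀⟩ := hne
  have : Nonempty (Xᶜ : Set V) := ⟨⟨u₀, hu₀⟩⟩
  refine ⟨fun u v => ?_⟩
  have h := hlink u v u.2 v.2
  have := h.ind (P := fun w => ∀ hw : w ∈ Xᶜ, (G.induce (Xᶜ : Set V)).Reachable u ⟨w, hw⟩)
    (fun _ => Reachable.refl _) (by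
      intro a b ha hP hab hb hb'
      refine (hP ha.right).trans (Adj.reachable ?_)
      exact hab)
  exact this v.2
end

section
/- Let G be a Hajós graph and let (G1, G2) be a 4-separation in G such that (G1, V(G1 ∩ G2)) is planar. Then |V(G1)| ≠ 6. -/
/-!
Write `S = V(G1 ∩ G2)` and suppose `V(G1) = S ∪ {u, v}`. By minimality every vertex of a Hajós
graph has degree at least 4 (`hajos_degree`), and all neighbours of `u` and `v` lie in
`S ∪ {u, v}`. If `u` and `v` had three common neighbours in `S`, then these, together with `u`, `v`
and the apex vertex, would form a `K3,3`, contradicting planarity (`no_three_common`). Counting in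
the 4-set `S` leaves only one possibility: `u` and `v` are adjacent, `S = {a, b, c, d}`, the
neighbours of `u` in `S` are `a, b, c` and those of `v` are `b, c, d`.

Let `H = G - {u, v} + ad`. A `K5`-subdivision in `H` becomes one in `G` on replacing the edge `ad`
by the path `a u v d` (`exists_rerouted_path`, `K5_transfer`), so `H` has none and is 4-colorable
by minimality. A 4-coloring of `H` gives `a` and `d` different colors, and any such coloring
extends to `u` and `v`; hence `G` is 4-colorable, a contradiction.
-/

open SimpleGraph

/-! ### Transferring subdivisions of `K5` -/

lemma mem_walkInterior_iff {V : Type} {G : SimpleGraph V} {u v : V} (p : G.Walk u v)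
    (hp : p.IsPath) (huv : u ≠ v) (x : V) :
    x ∈ walkInterior p ↔ x ∈ p.support ∧ x ≠ u ∧ x ≠ v := by
  have hnd := hp.support_nodup
  have hne : p.support.tail ≠ [] := by
    cases p with
    | nil => exact absurd rfl huv
    | cons h q => simp
  have h1 : p.support = u :: p.support.tail := p.cons_tail_support.symm
  have hlast : p.support.tail.getLast hne = v := by
    rw [List.getLast_tail]
    exact p.getLast_support
  have h2 : p.support.tail = walkInterior p ++ [v] := by
    have h := (List.dropLast_append_getLast hne).symm
    rwa [hlast] at h
  rw [h2] at h1
  rw [h1] at hnd ⊢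
  simp only [List.nodup_cons, List.mem_append, List.nodup_append,
    List.mem_cons] at hnd ⊢
  grind

/-- Transfer of a `K5`-subdivision along an injection `f`, when every path of `H` can be replaced
by a path of `G` whose new vertices lie in a set `X` off the range of `f` and are used only when
the original path runs through one fixed edge `e`. In a subdivision, at most one of the ten paths
contains `e`, so the new paths stay internally disjoint. -/
lemma K5_transfer {W V : Type} {H : SimpleGraph W} {G : SimpleGraph V} (f : W → V)
    (hf : Function.Injective f) (X : Set V) (e : Sym2 W) (hX : ∀ w, f w ∉ X)
    (hlift : ∀ x y (p : H.Walk x y), p.IsPath → ∃ q : G.Walk (f x) (f y), q.IsPath ∧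
      ∀ z ∈ q.support, (∃ w ∈ p.support, f w = z) ∨ (z ∈ X ∧ e ∈ p.edges))
    (hH : HasK5Subdivision H) : HasK5Subdivision G := by
  classical
  obtain ⟨b, hb, P, hpath, hbr, hdis⟩ := hH
  have hex : ∀ i j : Fin 5, ∃ q : G.Walk (f (b i)) (f (b j)), i < j → (q.IsPath ∧
      ∀ z ∈ q.support, (∃ w ∈ (P i j).support, f w = z) ∨ (z ∈ X ∧ e ∈ (P i j).edges)) := by
    intro i j
    by_cases hij : i < j
    · obtain ⟨q, hq⟩ := hlift _ _ (P i j) (hpath i j hij)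
      exact ⟨q, fun _ => hq⟩
    · obtain ⟨q, -⟩ := hlift _ _ (P i j).toPath.1 (P i j).toPath.2
      exact ⟨q, fun h => absurd h hij⟩
  choose Q hQ using hex
  have hbne : ∀ i j : Fin 5, i < j → b i ≠ b j := fun i j h h' => h.ne (hb h')
  have hint : ∀ i j : Fin 5, i < j → ∀ x, x ∈ walkInterior (P i j) ↔
      x ∈ (P i j).support ∧ x ≠ b i ∧ x ≠ b j :=
    fun i j h x => mem_walkInterior_iff _ (hpath i j h) (hbne i j h) x
  have hint' : ∀ i j : Fin 5, i < j → ∀ x, x ∈ walkInterior (Q i j) ↔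
      x ∈ (Q i j).support ∧ x ≠ f (b i) ∧ x ≠ f (b j) :=
    fun i j h x => mem_walkInterior_iff _ (hQ i j h).1 (hf.ne (hbne i j h)) x
  refine ⟨f ∘ b, hf.comp hb, Q, fun i j h => (hQ i j h).1, ?_, ?_⟩
  · intro i j h k hk
    obtain ⟨h1, h2, h3⟩ := (hint' i j h _).1 hk
    rcases (hQ i j h).2 _ h1 with ⟨w, hw, hw'⟩ | ⟨hz, -⟩
    · have hwk : w = b k := hf hw'
      subst hwk
      exact hbr i j h k ((hint i j h _).2
        ⟨hw, fun h' => h2 (congrArg f h'), fun h' => h3 (congrArg f h')⟩)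
    · exact hX _ hz
  · intro i j i' j' h h' hne x hx hx'
    obtain ⟨h1, h2, h3⟩ := (hint' i j h _).1 hx
    rcases (hQ i j h).2 _ h1 with ⟨w, hw, rfl⟩ | ⟨hz, he⟩
    · rcases (hQ i' j' h').2 _ hx' with ⟨w', hw', hww⟩ | ⟨hz, -⟩
      · have := hf hww
        subst this
        exact hdis i j i' j' h h' hne _ ((hint i j h _).2
          ⟨hw, fun h' => h2 (congrArg f h'), fun h' => h3 (congrArg f h')⟩) hw'
      · exact hX _ hz
    · rcases (hQ i' j' h').2 _ hx' with ⟨w', hw', rfl⟩ | ⟨-, he'⟩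
      · exact hX _ hz
      · induction e with
        | _ a d =>
        -- A common edge forces both of its ends to be the two ends of both paths.
        have had : a ≠ d := (P i j).adj_of_mem_edges he |>.ne
        have e1 := (P i j).fst_mem_support_of_mem_edges he
        have e2 := (P i j).snd_mem_support_of_mem_edges he
        have e3 := (P i' j').fst_mem_support_of_mem_edges he'
        have e4 := (P i' j').snd_mem_support_of_mem_edges he'
        have k1 := fun hh => hdis i j i' j' h h' hne a hh e3
        have k2 := fun hh => hdis i j i' j' h h' hne d hh e4
        have k3 := fun hh => hdis i' j' i j h' h hne.symm a hh e1
        have k4 := fun hh => hdis i' j' i j h' h hne.symm d hh e2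
        rw [hint i j h] at k1 k2
        rw [hint i' j' h'] at k3 k4
        have q1 : a = b i ∨ a = b j := or_iff_not_and_not.2 fun hh => k1 ⟨e1, hh⟩
        have q2 : d = b i ∨ d = b j := or_iff_not_and_not.2 fun hh => k2 ⟨e2, hh⟩
        have q3 : a = b i' ∨ a = b j' := or_iff_not_and_not.2 fun hh => k3 ⟨e3, hh⟩
        have q4 : d = b i' ∨ d = b j' := or_iff_not_and_not.2 fun hh => k4 ⟨e4, hh⟩
        have key : (i = i' ∧ j = j') ∨ (i = j' ∧ j = i') := by
          have hinj : ∀ x y, b x = b y → x = y := fun x y hh => hb hh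
          clear hlift hQ hint hint' hdis hbr hpath k1 k2 k3 k4 e1 e2 e3 e4
          grind
        rcases key with ⟨rfl, rfl⟩ | ⟨rfl, rfl⟩
        · exact hne rfl
        · exact lt_asymm h h'

lemma K5_of_embedding {W V : Type} {H : SimpleGraph W} {G : SimpleGraph V} (f : H →g G)
    (hf : Function.Injective f) (hH : HasK5Subdivision H) : HasK5Subdivision G := by
  obtain ⟨b, -⟩ := id hH
  refine K5_transfer f hf ∅ s(b 0, b 0) (fun _ => id) (fun x y p hp => ?_) hH
  refine ⟨p.map f, hp.map hf, fun z hz => Or.inl ?_⟩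
  simpa [SimpleGraph.Walk.support_map] using hz

/-- If all edges of `H` except `ad` are edges of `G`, then a path of `H` yields a path of `G`, the
edge `ad` being replaced by the path `a u v d`. -/
lemma exists_rerouted_path {W V : Type} {H : SimpleGraph W} {G : SimpleGraph V} (f : W → V)
    (hf : Function.Injective f) (u v : V) (a d : W) (hu : ∀ w, f w ≠ u) (hv : ∀ w, f w ≠ v)
    (hau : G.Adj (f a) u) (huv : G.Adj u v) (hvd : G.Adj v (f d))
    (hH : ∀ x y, H.Adj x y → G.Adj (f x) (f y) ∨ s(x, y) = s(a, d))
    (x y : W) (p : H.Walk x y) (hp : p.IsPath) :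
    ∃ q : G.Walk (f x) (f y), q.IsPath ∧ ∀ z ∈ q.support,
      (∃ w ∈ p.support, f w = z) ∨ (z ∈ ({u, v} : Set V) ∧ s(a, d) ∈ p.edges) := by
  induction p with
  | nil => exact ⟨.nil, by simp, by simp⟩
  | @cons x x' y h p ih =>
    rw [SimpleGraph.Walk.cons_isPath_iff] at hp
    obtain ⟨hp, hx⟩ := hp
    obtain ⟨q, hq, hs⟩ := ih hp
    have hxq : f x ∉ q.support := by
      intro hxq
      rcases hs _ hxq with ⟨w, hw, hwx⟩ | ⟨hz, -⟩
      · exact hx (hf hwx ▸ hw)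
      · rcases hz with hz | hz
        · exact hu _ hz
        · exact hv _ hz
    rcases hH x x' h with h' | he
    · refine ⟨.cons h' q, by simp [hq, hxq], ?_⟩
      intro z hz
      rw [SimpleGraph.Walk.support_cons, List.mem_cons] at hz
      rcases hz with rfl | hz
      · exact Or.inl ⟨x, by simp, rfl⟩
      · rcases hs z hz with ⟨w, hw, hwz⟩ | ⟨h1, h2⟩
        · exact Or.inl ⟨w, by simp [hw], hwz⟩
        · exact Or.inr ⟨h1, by simp [h2]⟩
    · have hnot : s(a, d) ∉ p.edges := by
        -- The edge just traversed is `ad`; the rest of the path misses `x`, hence this edge.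
        rw [← he]
        exact fun hm => hx (p.fst_mem_support_of_mem_edges hm)
      have hs' : ∀ z ∈ q.support, ∃ w ∈ p.support, f w = z := fun z hz =>
        (hs z hz).resolve_right fun h => hnot h.2
      have huq : u ∉ q.support := fun hm => by
        obtain ⟨w, -, hw⟩ := hs' _ hm
        exact hu _ hw
      have hvq : v ∉ q.support := fun hm => by
        obtain ⟨w, -, hw⟩ := hs' _ hm
        exact hv _ hw
      have hne := huv.ne
      have hxu := hu x
      have hxv := hv x
      rcases Sym2.eq_iff.1 he with ⟨rfl, rfl⟩ | ⟨rfl, rfl⟩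
      · refine ⟨.cons hau (.cons huv (.cons hvd q)), by simp_all, ?_⟩
        intro z hz
        simp only [SimpleGraph.Walk.support_cons, List.mem_cons] at hz
        rcases hz with rfl | rfl | rfl | hz
        · exact Or.inl ⟨x, by simp, rfl⟩
        · exact Or.inr ⟨by simp, by simp⟩
        · exact Or.inr ⟨by simp, by simp⟩
        · obtain ⟨w, hw, hwz⟩ := hs' z hz
          exact Or.inl ⟨w, by simp [hw], hwz⟩
      · refine ⟨.cons hvd.symm (.cons huv.symm (.cons hau.symm q)), ?_, ?_⟩
        · simp [hq, huq, hvq, hne.symm, hxu, hxv, hxq]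
        intro z hz
        simp only [SimpleGraph.Walk.support_cons, List.mem_cons] at hz
        rcases hz with rfl | rfl | rfl | hz
        · exact Or.inl ⟨x, by simp, rfl⟩
        · exact Or.inr ⟨by simp, by simp [Sym2.eq_swap]⟩
        · exact Or.inr ⟨by simp, by simp [Sym2.eq_swap]⟩
        · obtain ⟨w, hw, hwz⟩ := hs' z hz
          exact Or.inl ⟨w, by simp [hw], hwz⟩

/-! ### Minimality of Hajós graphs -/

/-- Minimality, stated for graphs on an arbitrary finite type rather than on `Fin n`. -/
lemma hajos_minimal {V : Type} [Fintype V] {G : SimpleGraph V} (hG : IsHajos G)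
    {W : Type} [Fintype W] (hc : Fintype.card W < Fintype.card V) (H : SimpleGraph W)
    (hH : ¬ HasK5Subdivision H) : H.Colorable 4 := by
  let e := Fintype.equivFin W
  have iso : H ≃g H.map e.toEmbedding := SimpleGraph.Iso.map e H
  rcases hG.2.2 _ hc (H.map e.toEmbedding) with h | h
  · exact absurd (K5_of_embedding iso.symm.toHom iso.symm.injective h) hH
  · exact h.of_hom iso.toHom

/-- Every vertex of a Hajós graph has degree at least 4: a 4-coloring of `G - u` extends to a vertex
`u` of smaller degree. -/
lemma hajos_degree {V : Type} [Fintype V] {G : SimpleGraph V} (hG : IsHajos G) (u : V)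
    (N : Finset V) (hN : ∀ x, G.Adj u x → x ∈ N) : 4 ≤ N.card := by
  classical
  by_contra hlt
  push Not at hlt
  let W := {x : V // x ≠ u}
  have hc : Fintype.card W < Fintype.card V :=
    Fintype.card_subtype_lt (x := u) (by simp)
  have hcol : (G.comap (Subtype.val : W → V)).Colorable 4 := by
    refine hajos_minimal hG hc _ fun h => hG.1 ?_
    exact K5_of_embedding (SimpleGraph.Hom.comap _ G) Subtype.val_injective h
  obtain ⟨c⟩ := hcol
  let g : V → Fin 4 := fun x => if h : x ≠ u then c ⟨x, h⟩ else 0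
  have hcard : (N.image g).card < (Finset.univ : Finset (Fin 4)).card := by
    rw [Finset.card_univ, Fintype.card_fin]
    exact lt_of_le_of_lt Finset.card_image_le hlt
  obtain ⟨k, -, hk⟩ := Finset.exists_mem_notMem_of_card_lt_card hcard
  have hk' : ∀ x, G.Adj u x → g x ≠ k := fun x hx h =>
    hk (Finset.mem_image.2 ⟨x, hN x hx, h⟩)
  refine hG.2.1 ⟨SimpleGraph.Coloring.mk (fun x => if x = u then k else g x) ?_⟩
  intro x y hxy
  by_cases hx : x = u <;> by_cases hy : y = u
  · exact absurd (hx.trans hy.symm) hxy.ne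
  · subst hx
    simpa [hy] using (hk' y hxy).symm
  · subst hy
    simpa [hx] using hk' x hxy.symm
  · simp only [hx, hy, if_false, g, ne_eq, not_false_eq_true, dif_pos]
    exact c.valid (v := ⟨x, hx⟩) (w := ⟨y, hy⟩) hxy

/-! ### The planarity obstruction -/

/-- In a planar pair `(H, S)`, two vertices cannot have three common neighbours in `S`: with the
apex vertex they would form a `K3,3`. -/
lemma no_three_common {V : Type} {G : SimpleGraph V} {H : G.Subgraph} {S : Set V}
    (hp : SubgraphPairPlanar H S) {u v : V} (huv : u ≠ v) (t : Fin 3 → V)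
    (ht : Function.Injective t) (htS : ∀ i, t i ∈ S) (hu : ∀ i, H.Adj u (t i))
    (hv : ∀ i, H.Adj v (t i)) : False := by
  apply hp.2
  have hadj : ∀ i j : Fin 3, (apexGraph H.coe {x : H.verts | (x : V) ∈ S}).Adj
      ((![none, some ⟨u, (hu 0).fst_mem⟩, some ⟨v, (hv 0).fst_mem⟩] : Fin 3 → Option H.verts) i)
      (some ⟨t j, (hu j).snd_mem⟩) := by
    intro i j
    rw [apexGraph, SimpleGraph.fromRel_adj]
    fin_cases i
    · exact ⟨by simp, Or.inl (Or.inr ⟨rfl, _, htS j, rfl⟩)⟩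
    · exact ⟨by simpa using (hu j).ne, Or.inl (Or.inl ⟨_, _, rfl, rfl, hu j⟩)⟩
    · exact ⟨by simpa using (hv j).ne, Or.inl (Or.inl ⟨_, _, rfl, rfl, hv j⟩)⟩
  refine ⟨_, fun j => some ⟨t j, (hu j).snd_mem⟩, ?_, ?_, fun i j => (hadj i j).ne,
    fun i j => (hadj i j).toWalk, ?_, ?_, ?_⟩
  · intro i j hij
    fin_cases i <;> fin_cases j <;> simp_all [eq_comm]
  · intro i j hij
    exact ht (by simpa using hij)
  · intro i j
    simpa using (hadj i j).ne
  · intro i j k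
    simp [walkInterior]
  · intro i j i' j' _ x hx
    simp [walkInterior] at hx

/-! ### Removing an adjacent pair of degree-4 vertices -/

/-- A coloring of `a, b, c, d` with `a` and `d` colored differently extends to adjacent vertices
`u`, `v` whose remaining neighbours are `a, b, c` and `b, c, d`. -/
lemma color_extension : ∀ A B C D : Fin 4, A ≠ D → ∃ x y : Fin 4, x ≠ y ∧
    (x ≠ A ∧ x ≠ B ∧ x ≠ C) ∧ (y ≠ B ∧ y ≠ C ∧ y ≠ D) := by
  decide

/-- A Hajós graph has no adjacent vertices `u`, `v` with neighbourhoods `v, a, b, c` and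
`u, b, c, d`: the graph `G - {u, v} + ad` would be a smaller example. -/
lemma hajos_no_pair {V : Type} [Fintype V] {G : SimpleGraph V} (hG : IsHajos G)
    {u v a b c d : V} (huv : G.Adj u v) (hua : G.Adj u a) (hvd : G.Adj v d)
    (hav : a ≠ v) (hdu : d ≠ u) (had : a ≠ d)
    (hNu : ∀ x, G.Adj u x → x = v ∨ x = a ∨ x = b ∨ x = c)
    (hNv : ∀ x, G.Adj v x → x = u ∨ x = b ∨ x = c ∨ x = d) : False := by
  classical
  let W := {x : V // x ≠ u ∧ x ≠ v}
  have hc : Fintype.card W < Fintype.card V :=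
    Fintype.card_subtype_lt (x := u) (by simp)
  let a' : W := ⟨a, hua.ne', hav⟩
  let d' : W := ⟨d, hdu, hvd.ne'⟩
  have had' : a' ≠ d' := fun h => had (congrArg Subtype.val h)
  let H : SimpleGraph W := G.comap Subtype.val ⊔ SimpleGraph.edge a' d'
  have hH : ¬ HasK5Subdivision H := by
    intro h
    refine hG.1 (K5_transfer Subtype.val Subtype.val_injective {u, v} s(a', d') ?_ ?_ h)
    · rintro ⟨w, h1, h2⟩ (h | h)
      · exact h1 h
      · exact h2 h
    · refine exists_rerouted_path Subtype.val Subtype.val_injective u v a' d'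
        (fun w => w.2.1) (fun w => w.2.2) hua.symm huv hvd ?_
      intro x y hxy
      rcases hxy with hxy | hxy
      · exact Or.inl hxy
      · rw [SimpleGraph.edge_adj] at hxy
        exact Or.inr (Sym2.eq_iff.2 (by tauto))
  obtain ⟨k⟩ := hajos_minimal hG hc H hH
  let g : V → Fin 4 := fun x => if h : x ≠ u ∧ x ≠ v then k ⟨x, h⟩ else 0
  have hg : ∀ x y, x ≠ u → x ≠ v → y ≠ u → y ≠ v → G.Adj x y → g x ≠ g y := by
    intro x y h1 h2 h3 h4 hxy
    simp only [g, dif_pos (And.intro h1 h2), dif_pos (And.intro h3 h4)]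
    exact k.valid (Or.inl hxy)
  have hgad : g a ≠ g d := by
    have h1 : g a = k a' := dif_pos a'.2
    have h2 : g d = k d' := dif_pos d'.2
    rw [h1, h2]
    refine k.valid (Or.inr ?_)
    rw [SimpleGraph.edge_adj]
    exact ⟨Or.inl ⟨rfl, rfl⟩, had'⟩
  obtain ⟨X, Y, hXY, ⟨hXa, hXb, hXc⟩, ⟨hYb, hYc, hYd⟩⟩ :=
    color_extension (g a) (g b) (g c) (g d) hgad
  let col : V → Fin 4 := fun x => if x = u then X else if x = v then Y else g x
  have hcu : col u = X := by simp [col]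
  have hcv : col v = Y := by simp [col, huv.ne']
  have hco : ∀ x, x ≠ u → x ≠ v → col x = g x := fun x h1 h2 => by simp [col, h1, h2]
  have hu' : ∀ y, G.Adj u y → col u ≠ col y := by
    intro y hy
    by_cases hyv : y = v
    · rwa [hyv, hcu, hcv]
    · rw [hcu, hco y hy.ne' hyv]
      rcases hNu y hy with h | rfl | rfl | rfl
      exacts [absurd h hyv, hXa, hXb, hXc]
  have hv' : ∀ y, G.Adj v y → col v ≠ col y := by
    intro y hy
    by_cases hyu : y = u
    · rw [hyu, hcu, hcv]
      exact hXY.symm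
    · rw [hcv, hco y hyu hy.ne']
      rcases hNv y hy with h | rfl | rfl | rfl
      exacts [absurd h hyu, hYb, hYc, hYd]
  refine hG.2.1 ⟨SimpleGraph.Coloring.mk col ?_⟩
  intro x y hxy
  by_cases hx : x = u
  · subst hx
    exact hu' y hxy
  by_cases hx2 : x = v
  · subst hx2
    exact hv' y hxy
  by_cases hy : y = u
  · subst hy
    exact (hu' x hxy.symm).symm
  by_cases hy2 : y = v
  · subst hy2
    exact (hv' x hxy.symm).symm
  rw [hco x hx hx2, hco y hy hy2]
  exact hg x y hx hx2 hy hy2 hxy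

/-- Lemma 2.2: If `G` is a Hajós graph and `(G1, G2)` is a 4-separation of
`G` with `(G1, V(G1 ∩ G2))` planar, then `|V(G1)| ≠ 6`. -/
theorem statement2 {V : Type} [Fintype V] (G : SimpleGraph V) (hG : IsHajos G)
    (G1 G2 : G.Subgraph) (hsep : IsSeparation G1 G2 4)
    (hplanar : SubgraphPairPlanar G1 (G1.verts ∩ G2.verts)) :
    G1.verts.ncard ≠ 6 := by
  classical
  intro hsix
  obtain ⟨hsup, -, hfour, -, -⟩ := hsep
  set S : Finset V := (G1.verts ∩ G2.verts).toFinset with hS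
  have hSmem : ∀ x, x ∈ S ↔ x ∈ G1.verts ∧ x ∈ G2.verts := by simp [hS]
  have hScard : S.card = 4 := by rw [hS, ← Set.ncard_eq_toFinset_card', hfour]
  have hdiff : (G1.verts \ G2.verts).ncard = 2 := by
    have := Set.ncard_inter_add_ncard_sdiff_eq_ncard G1.verts G2.verts
    omega
  obtain ⟨u, v, huv, hpair⟩ := Set.ncard_eq_two.1 hdiff
  have hmem : ∀ x, (x ∈ G1.verts ∧ x ∉ G2.verts) ↔ x = u ∨ x = v := fun x => by
    have := Set.ext_iff.1 hpair x
    simpa using this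
  have hu := (hmem u).2 (Or.inl rfl)
  have hv := (hmem v).2 (Or.inr rfl)
  have hAdj1 : ∀ w x, w ∉ G2.verts → G.Adj w x → G1.Adj w x := by
    intro w x hw hx
    have h : (G1 ⊔ G2).Adj w x := by
      rw [hsup]
      exact hx
    rcases h with h | h
    · exact h
    · exact absurd h.fst_mem hw
  have hnbr : ∀ w x, w ∉ G2.verts → G.Adj w x → x ∈ S ∨ x = u ∨ x = v := by
    intro w x hw hx
    have h1 := (hAdj1 w x hw hx).snd_mem
    by_cases h2 : x ∈ G2.verts
    · exact Or.inl ((hSmem x).2 ⟨h1, h2⟩)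
    · exact Or.inr ((hmem x).1 ⟨h1, h2⟩)
  set A := S.filter (G.Adj u) with hA
  set B := S.filter (G.Adj v) with hB
  have hnotS : u ∉ S ∧ v ∉ S := ⟨fun h => hu.2 ((hSmem u).1 h).2, fun h => hv.2 ((hSmem v).1 h).2⟩
  have hNu : ∀ x, G.Adj u x → x = v ∨ x ∈ A := by
    intro x hx
    rcases hnbr u x hu.2 hx with h | h | h
    · exact Or.inr (Finset.mem_filter.2 ⟨h, hx⟩)
    · exact absurd h hx.ne'
    · exact Or.inl h
  have hNv : ∀ x, G.Adj v x → x = u ∨ x ∈ B := by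
    intro x hx
    rcases hnbr v x hv.2 hx with h | h | h
    · exact Or.inr (Finset.mem_filter.2 ⟨h, hx⟩)
    · exact Or.inl h
    · exact absurd h hx.ne'
  have hinter : (A ∩ B).card ≤ 2 := by
    by_contra hgt
    push Not at hgt
    obtain ⟨T, hT, hTc⟩ := Finset.exists_subset_card_eq (show 3 ≤ (A ∩ B).card from hgt)
    let t : Fin 3 → V := fun i => (T.equivFinOfCardEq hTc).symm i
    have htm : ∀ i, t i ∈ A ∩ B := fun i => hT ((T.equivFinOfCardEq hTc).symm i).2
    simp only [Finset.mem_inter, hA, hB, Finset.mem_filter] at htm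
    refine no_three_common hplanar huv t ?_ (fun i => (hSmem _).1 (htm i).1.1)
      (fun i => hAdj1 _ _ hu.2 (htm i).1.2) (fun i => hAdj1 _ _ hv.2 (htm i).2.2)
    exact Subtype.val_injective.comp (Equiv.injective _)
  have hunion : (A ∪ B).card ≤ 4 := by
    rw [← hScard]
    exact Finset.card_le_card (Finset.union_subset (Finset.filter_subset _ _)
      (Finset.filter_subset _ _))
  have hsum := Finset.card_union_add_card_inter A B
  have hA3 : 3 ≤ A.card := by
    have := hajos_degree hG u (insert v A) fun x hx => Finset.mem_insert.2 (hNu x hx)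
    have := Finset.card_insert_le v A
    omega
  have hB3 : 3 ≤ B.card := by
    have := hajos_degree hG v (insert u B) fun x hx => Finset.mem_insert.2 (hNv x hx)
    have := Finset.card_insert_le u B
    omega
  have hadj : G.Adj u v := by
    by_contra hna
    have h1 := hajos_degree hG u A fun x hx =>
      (hNu x hx).resolve_left fun h => hna (h ▸ hx)
    have h2 := hajos_degree hG v B fun x hx =>
      (hNv x hx).resolve_left fun h => hna (h ▸ hx).symm
    omega
  have hi2 : (A ∩ B).card = 2 := by omega
  have hAB : (A \ B).card = 1 := by
    have := Finset.card_inter_add_card_sdiff A B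
    omega
  have hBA : (B \ A).card = 1 := by
    have := Finset.card_inter_add_card_sdiff B A
    rw [Finset.inter_comm] at this
    omega
  obtain ⟨a, ha⟩ := Finset.card_eq_one.1 hAB
  obtain ⟨d, hd⟩ := Finset.card_eq_one.1 hBA
  obtain ⟨b, c, -, hbc⟩ := Finset.card_eq_two.1 hi2
  have ha' : ∀ x, x ∈ A ∧ x ∉ B ↔ x = a := fun x => by
    simpa using Finset.ext_iff.1 ha x
  have hd' : ∀ x, x ∈ B ∧ x ∉ A ↔ x = d := fun x => by
    simpa using Finset.ext_iff.1 hd x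
  have hbc' : ∀ x, x ∈ A ∧ x ∈ B ↔ x = b ∨ x = c := fun x => by
    simpa using Finset.ext_iff.1 hbc x
  have haA := (ha' a).2 rfl
  have hdB := (hd' d).2 rfl
  have hua := Finset.mem_filter.1 haA.1
  have hvd := Finset.mem_filter.1 hdB.1
  refine hajos_no_pair (a := a) (b := b) (c := c) (d := d) hG hadj hua.2 hvd.2
    (fun h => hnotS.2 (h ▸ hua.1)) (fun h => hnotS.1 (h ▸ hvd.1))
    (fun h => haA.2 (h ▸ hdB.1)) ?_ ?_
  · intro x hx
    rcases hNu x hx with h | h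
    · exact Or.inl h
    · by_cases h' : x ∈ B
      · rcases (hbc' x).1 ⟨h, h'⟩ with h | h <;> simp [h]
      · simp [(ha' x).1 ⟨h, h'⟩]
  · intro x hx
    rcases hNv x hx with h | h
    · exact Or.inl h
    · by_cases h' : x ∈ A
      · rcases (hbc' x).1 ⟨h', h⟩ with h | h <;> simp [h]
      · simp [(hd' x).1 ⟨h, h'⟩]
end
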